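/- arXiv:2303.03327 — 2 statements merged into one kernel-verified Lean document; each statement's English description precedes it below -/
import Mathlib

section
/- Main lower bound (Theorem 1). Let M be a class of bandit models on an action set Π, each model M given by mean reward function f_M : Π → [0,1] with variance-1 Gaussian reward noise, and assume sup_{M∈M} f_M(π_M) = 1. Let C ≥ 2 be an integer, let T ≥ 1, and let ε satisfy 4/T ≤ ε ≤ 1/(3C√T). Set Δ := dec^γ_ε(M) and suppose M is ρ-localized with ρ ≥ 6C²ε and that Δ ≥ 6C²ε. Then for any algorithm {p_t}_{t=1}^T there exists a model M ∈ M such that, under the trajectory law P^M induced by the algorithm and ground truth M, P^M[ (1/T)·Reg_γ(T) ≥ Δ − 3·min(ρ, Δ+1−γ)/C ] ≥ 1/(3C). -/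
open MeasureTheory ProbabilityTheory
open scoped ENNReal NNReal

noncomputable section

/-- Trajectory law of a bandit algorithm with Gaussian variance-1 reward noise:
the law of `((π₁,r₁),…,(π_n,r_n))` where `π_t ∼ alg t` applied to the history and
`r_t ∼ N(f π_t, 1)`. -/
def trajMeasure {P : Type*} [MeasurableSpace P] (f : P → ℝ)
    (alg : (t : ℕ) → Kernel (Fin t → P × ℝ) P) :
    (n : ℕ) → Measure (Fin n → P × ℝ)
  | 0 => Measure.dirac (fun i : Fin 0 => i.elim0)
  | (n+1) => (trajMeasure f alg n).bind fun h =>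
      (alg n h).bind fun a =>
        (gaussianReal (f a) 1).map fun r => Fin.snoc h (a, r)

/-- Constrained γ-DEC of a class of mean reward functions with respect to a
reference mean function `fbar`:
`inf_p sup { E_{π∼p}[γ f* − f(π)] : f ∈ F, E_{π∼p}[(f(π)−fbar(π))²] ≤ ε² }`. -/
def decConstrained {P : Type*} [MeasurableSpace P] (γ ε : ℝ)
    (F : Set (P → ℝ)) (fbar : P → ℝ) : ℝ :=
  ⨅ p : ProbabilityMeasure P,
    ⨆ f : {f : P → ℝ // f ∈ F ∧ ∫ x, (f x - fbar x)^2 ∂(p : Measure P) ≤ ε^2},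
      ∫ x, (γ * (⨆ y, (f : P → ℝ) y) - (f : P → ℝ) x) ∂(p : Measure P)

/-- The γ-DEC of a model class: the supremum over reference mean functions `fbar`
(with values in [0,1], not necessarily in the class) of the constrained γ-DEC of
`F ∪ {fbar}` with respect to `fbar`. -/
def dec {P : Type*} [MeasurableSpace P] (γ ε : ℝ) (F : Set (P → ℝ)) : ℝ :=
  ⨆ fbar : {g : P → ℝ // Measurable g ∧ ∀ x, g x ∈ Set.Icc (0:ℝ) 1},
    decConstrained γ ε (F ∪ {(fbar : P → ℝ)}) fbar

/-! ### Chains of kernels -/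

/-- Appending one element to a history. -/
def sn {X : Type*} {n : ℕ} (h : Fin n → X) (x : X) : Fin (n+1) → X :=
  Fin.snoc (α := fun _ => X) h x

lemma sn_castSucc {X : Type*} {n : ℕ} (h : Fin n → X) (x : X) (i : Fin n) :
    sn h x i.castSucc = h i := by simp [sn]

lemma sn_last {X : Type*} {n : ℕ} (h : Fin n → X) (x : X) :
    sn h x (Fin.last n) = x := by simp [sn]

lemma measurable_sn {X : Type*} [MeasurableSpace X] {n : ℕ} :
    Measurable (fun q : (Fin n → X) × X => sn q.1 q.2) := by
  rw [measurable_pi_iff]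
  intro i
  refine Fin.lastCases ?_ (fun j => ?_) i
  · simp only [sn_last]; exact measurable_snd
  · simp only [sn_castSucc]; fun_prop

lemma measurable_sn_right {X : Type*} [MeasurableSpace X] {n : ℕ} (h : Fin n → X) :
    Measurable (fun x : X => sn h x) :=
  measurable_sn.comp measurable_prodMk_left

/-- Law of the first `n` elements of the chain with step kernels `κ`. -/
def chain {X : Type*} [MeasurableSpace X] (κ : (t : ℕ) → Kernel (Fin t → X) X) :
    (n : ℕ) → Measure (Fin n → X)
  | 0 => Measure.dirac (fun i : Fin 0 => i.elim0)
  | (n+1) => ((chain κ n) ⊗ₘ (κ n)).map (fun q => sn q.1 q.2)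

instance chain_prob {X : Type*} [MeasurableSpace X] (κ : (t : ℕ) → Kernel (Fin t → X) X)
    [∀ t, IsMarkovKernel (κ t)] (n : ℕ) : IsProbabilityMeasure (chain κ n) := by
  induction n with
  | zero => unfold chain; infer_instance
  | succ n ih =>
    unfold chain
    exact Measure.isProbabilityMeasure_map measurable_sn.aemeasurable

lemma lintegral_chain_succ {X : Type*} [MeasurableSpace X]
    (κ : (t : ℕ) → Kernel (Fin t → X) X)
    [∀ t, IsMarkovKernel (κ t)] (n : ℕ) (G : (Fin (n+1) → X) → ℝ≥0∞) (hG : Measurable G) :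
    ∫⁻ h, G h ∂(chain κ (n+1)) = ∫⁻ h, ∫⁻ x, G (sn h x) ∂(κ n h) ∂(chain κ n) := by
  rw [chain, lintegral_map hG measurable_sn]
  exact Measure.lintegral_compProd (hG.comp measurable_sn)

lemma integral_chain_succ {X : Type*} [MeasurableSpace X]
    (κ : (t : ℕ) → Kernel (Fin t → X) X)
    [∀ t, IsMarkovKernel (κ t)] (n : ℕ) (G : (Fin (n+1) → X) → ℝ) (hG : Measurable G)
    (K : ℝ) (hK : ∀ h, |G h| ≤ K) :
    ∫ h, G h ∂(chain κ (n+1)) = ∫ h, ∫ x, G (sn h x) ∂(κ n h) ∂(chain κ n) := by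
  rw [chain, integral_map measurable_sn.aemeasurable hG.aestronglyMeasurable,
    Measure.integral_compProd]
  exact Integrable.of_bound (hG.comp measurable_sn).aestronglyMeasurable K
    (Filter.Eventually.of_forall fun q => by simpa using hK _)

/-- The Gaussian reward kernel. -/
def gk {P : Type*} [MeasurableSpace P] (f : P → ℝ) (hf : Measurable f) : Kernel P ℝ where
  toFun a := gaussianReal (f a) 1
  measurable' := by
    have := measurable_gaussianReal
    exact this.comp (hf.prodMk measurable_const)

instance {P : Type*} [MeasurableSpace P] (f : P → ℝ) (hf : Measurable f) :
    IsMarkovKernel (gk f hf) := ⟨fun a => by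
      change IsProbabilityMeasure (gaussianReal (f a) 1); infer_instance⟩

/-- One step of the bandit interaction. -/
def step {P : Type*} [MeasurableSpace P] (f : P → ℝ) (hf : Measurable f)
    (alg : (t : ℕ) → Kernel (Fin t → P × ℝ) P) (n : ℕ) : Kernel (Fin n → P × ℝ) (P × ℝ) :=
  (alg n) ⊗ₖ (Kernel.prodMkLeft _ (gk f hf))

instance {P : Type*} [MeasurableSpace P] (f : P → ℝ) (hf : Measurable f)
    (alg : (t : ℕ) → Kernel (Fin t → P × ℝ) P) [∀ t, IsMarkovKernel (alg t)] (n : ℕ) :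
    IsMarkovKernel (step f hf alg n) := by unfold step; infer_instance

lemma lintegral_step {P : Type*} [MeasurableSpace P] (f : P → ℝ) (hf : Measurable f)
    (alg : (t : ℕ) → Kernel (Fin t → P × ℝ) P) [∀ t, IsMarkovKernel (alg t)] (n : ℕ)
    (h : Fin n → P × ℝ) (G : P × ℝ → ℝ≥0∞) (hG : Measurable G) :
    ∫⁻ x, G x ∂(step f hf alg n h) = ∫⁻ a, ∫⁻ r, G (a, r) ∂(gaussianReal (f a) 1) ∂(alg n h) := by
  rw [step, Kernel.lintegral_compProd _ _ _ hG]
  rfl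

lemma integral_step {P : Type*} [MeasurableSpace P] (f : P → ℝ) (hf : Measurable f)
    (alg : (t : ℕ) → Kernel (Fin t → P × ℝ) P) [∀ t, IsMarkovKernel (alg t)] (n : ℕ)
    (h : Fin n → P × ℝ) (G : P × ℝ → ℝ) (hG : Measurable G) (K : ℝ) (hK : ∀ h, |G h| ≤ K) :
    ∫ x, G x ∂(step f hf alg n h) = ∫ a, ∫ r, G (a, r) ∂(gaussianReal (f a) 1) ∂(alg n h) := by
  rw [step, ProbabilityTheory.integral_compProd]
  · rfl
  exact Integrable.of_bound hG.aestronglyMeasurable K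
    (Filter.Eventually.of_forall fun q => by simpa using hK _)

lemma traj_eq_chain {P : Type*} [MeasurableSpace P] (f : P → ℝ) (hf : Measurable f)
    (alg : (t : ℕ) → Kernel (Fin t → P × ℝ) P) [∀ t, IsMarkovKernel (alg t)] (n : ℕ) :
    trajMeasure f alg n = chain (step f hf alg) n := by
  induction n with
  | zero => rfl
  | succ n ih =>
    rw [trajMeasure, ih]
    have key : ∀ h : Fin n → P × ℝ, ((alg n h).bind fun a =>
        (gaussianReal (f a) 1).map fun r => (Fin.snoc h (a, r) : Fin (n+1) → P × ℝ))
        = (step f hf alg n h).map (sn h) := by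
      intro h
      have hm : Measurable fun a => (gaussianReal (f a) 1).map
          fun r => (Fin.snoc h (a, r) : Fin (n+1) → P × ℝ) := by
        have : (fun a => (gaussianReal (f a) 1).map
          fun r => (Fin.snoc h (a, r) : Fin (n+1) → P × ℝ)) =
          fun a => ((Kernel.id ×ₖ gk f hf).map (sn h)) a := by
          funext a
          rw [Kernel.map_apply _ (measurable_sn_right h), Kernel.prod_apply, Kernel.id_apply,
            Measure.dirac_prod, Measure.map_map (measurable_sn_right h) measurable_prodMk_left]
          rfl
        rw [this]
        exact Kernel.measurable _
      ext s hs
      have hs2 : MeasurableSet (sn h ⁻¹' s) := measurable_sn_right h hs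
      rw [Measure.bind_apply hs hm.aemeasurable, Measure.map_apply (measurable_sn_right h) hs,
        ← lintegral_indicator_one hs2,
        lintegral_step f hf alg n h _ (measurable_one.indicator hs2)]
      refine lintegral_congr fun a => ?_
      have hm2 : Measurable fun r : ℝ => (Fin.snoc h (a, r) : Fin (n+1) → P × ℝ) :=
        (measurable_sn_right h).comp measurable_prodMk_left
      rw [Measure.map_apply hm2 hs, ← lintegral_indicator_one (hm2 hs)]
      rfl
    simp_rw [key]
    have hm : Measurable fun h => (step f hf alg n h).map (sn h) := by
      have : (fun h => (step f hf alg n h).map (sn h)) =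
          fun h => ((Kernel.id ×ₖ step f hf alg n).map
            (fun q : (Fin n → P × ℝ) × (P × ℝ) => sn q.1 q.2)) h := by
        funext h
        rw [Kernel.map_apply _ measurable_sn, Kernel.prod_apply, Kernel.id_apply,
          Measure.dirac_prod, Measure.map_map measurable_sn measurable_prodMk_left]
        rfl
      rw [this]
      exact Kernel.measurable _
    ext s hs
    rw [Measure.bind_apply hs hm.aemeasurable, ← lintegral_indicator_one hs,
      lintegral_chain_succ _ _ _ (measurable_one.indicator hs)]
    refine lintegral_congr fun h => ?_
    rw [Measure.map_apply (measurable_sn_right h) hs,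
      ← lintegral_indicator_one (measurable_sn_right h hs)]
    rfl

/-! ### Freezing a chain -/

open Classical in
/-- Follow the history while it stays in `B`; afterwards write `c`. -/
def freeze {X : Type*} (B : (n : ℕ) → Set (Fin n → X)) (c : X) :
    (n : ℕ) → (Fin n → X) → (Fin n → X)
  | 0, h => h
  | (n+1), h => sn (freeze B c n (fun i => h i.castSucc))
      (if freeze B c n (fun i => h i.castSucc) ∈ B n then h (Fin.last n) else c)

lemma freeze_measurable {X : Type*} [MeasurableSpace X] (B : (n : ℕ) → Set (Fin n → X))
    (hB : ∀ n, MeasurableSet (B n)) (c : X) (n : ℕ) : Measurable (freeze B c n) := by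
  induction n with
  | zero => exact measurable_id
  | succ n ih =>
    have h1 : Measurable fun h : Fin (n+1) → X => freeze B c n (fun i => h i.castSucc) :=
      ih.comp (by fun_prop)
    refine measurable_sn.comp (h1.prodMk ?_)
    exact Measurable.ite (h1 (hB n)) (by fun_prop) measurable_const

lemma sn_init {X : Type*} {n : ℕ} (h : Fin (n+1) → X) :
    sn (fun i => h i.castSucc) (h (Fin.last n)) = h := by
  funext i
  refine Fin.lastCases ?_ (fun j => ?_) i
  · rw [sn_last]
  · rw [sn_castSucc]

lemma freeze_eq {X : Type*} (B : (n : ℕ) → Set (Fin n → X)) (c : X)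
    (hdown : ∀ n h x, sn h x ∈ B (n+1) → h ∈ B n) (n : ℕ) (h : Fin n → X)
    (hh : freeze B c n h ∈ B n) : freeze B c n h = h := by
  induction n with
  | zero => rfl
  | succ n ih =>
    rw [freeze] at hh ⊢
    have h1 := hdown _ _ _ hh
    rw [if_pos h1, ih _ h1, sn_init]

lemma freeze_eq' {X : Type*} (B : (n : ℕ) → Set (Fin n → X)) (c : X)
    (hdown : ∀ n h x, sn h x ∈ B (n+1) → h ∈ B n) (n : ℕ) (h : Fin n → X)
    (hh : h ∈ B n) : freeze B c n h = h := by
  induction n with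
  | zero => rfl
  | succ n ih =>
    rw [← sn_init h] at hh
    have h1 := hdown _ _ _ hh
    rw [freeze, ih _ h1, if_pos h1, sn_init]

/-- Step kernels of the frozen chain. -/
def fk {X : Type*} [MeasurableSpace X] (κ : (t : ℕ) → Kernel (Fin t → X) X)
    (B : (n : ℕ) → Set (Fin n → X)) (hB : ∀ n, MeasurableSet (B n)) (c : X) (t : ℕ) :
    Kernel (Fin t → X) X :=
  open Classical in Kernel.piecewise (hB t) (κ t) (Kernel.const _ (Measure.dirac c))

lemma fk_pos {X : Type*} [MeasurableSpace X] (κ : (t : ℕ) → Kernel (Fin t → X) X)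
    (B : (n : ℕ) → Set (Fin n → X)) (hB : ∀ n, MeasurableSet (B n)) (c : X) (t : ℕ)
    (h : Fin t → X) (hh : h ∈ B t) : fk κ B hB c t h = κ t h := by
  classical
  rw [fk, Kernel.piecewise_apply, if_pos hh]

lemma fk_neg {X : Type*} [MeasurableSpace X] (κ : (t : ℕ) → Kernel (Fin t → X) X)
    (B : (n : ℕ) → Set (Fin n → X)) (hB : ∀ n, MeasurableSet (B n)) (c : X) (t : ℕ)
    (h : Fin t → X) (hh : h ∉ B t) : fk κ B hB c t h = Measure.dirac c := by
  classical
  rw [fk, Kernel.piecewise_apply, if_neg hh]; rfl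

instance {X : Type*} [MeasurableSpace X] (κ : (t : ℕ) → Kernel (Fin t → X) X)
    (B : (n : ℕ) → Set (Fin n → X)) (hB : ∀ n, MeasurableSet (B n)) (c : X)
    [∀ t, IsMarkovKernel (κ t)] (t : ℕ) : IsMarkovKernel (fk κ B hB c t) := by
  unfold fk; infer_instance

lemma map_freeze {X : Type*} [MeasurableSpace X] (κ : (t : ℕ) → Kernel (Fin t → X) X)
    (B : (n : ℕ) → Set (Fin n → X)) (hB : ∀ n, MeasurableSet (B n)) (c : X)
    (hdown : ∀ n h x, sn h x ∈ B (n+1) → h ∈ B n)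
    [∀ t, IsMarkovKernel (κ t)] (n : ℕ) :
    (chain κ n).map (freeze B c n) = chain (fk κ B hB c) n := by
  classical
  induction n with
  | zero =>
    have : (freeze B c 0) = id := rfl
    rw [this, Measure.map_id]; rfl
  | succ n ih =>
    ext s hs
    have hfm := freeze_measurable B hB c
    rw [Measure.map_apply (hfm _) hs, ← lintegral_indicator_one (hfm _ hs),
      ← lintegral_indicator_one hs,
      lintegral_chain_succ _ _ _ (measurable_one.indicator (hfm _ hs)),
      lintegral_chain_succ _ _ _ (measurable_one.indicator hs), ← ih]
    have hG : Measurable (s.indicator (1 : (Fin (n+1) → X) → ℝ≥0∞)) := measurable_one.indicator hs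
    have hm : Measurable fun h => ∫⁻ x, s.indicator (1 : (Fin (n+1) → X) → ℝ≥0∞) (sn h x)
        ∂(fk κ B hB c n h) :=
      Measurable.lintegral_kernel_prod_right' (κ := fk κ B hB c n)
        (f := fun q => s.indicator (1 : (Fin (n+1) → X) → ℝ≥0∞) (sn q.1 q.2))
        (hG.comp measurable_sn)
    rw [lintegral_map hm (hfm n)]
    refine lintegral_congr fun h => ?_
    have e : ∀ x, (freeze B c (n+1) ⁻¹' s).indicator (1 : (Fin (n+1) → X) → ℝ≥0∞) (sn h x)
        = s.indicator (1 : (Fin (n+1) → X) → ℝ≥0∞) (freeze B c (n+1) (sn h x)) := fun x => rfl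
    simp_rw [e]
    have e' : ∀ x, freeze B c (n+1) (sn h x) = sn (freeze B c n h)
        (if freeze B c n h ∈ B n then x else c) := by
      intro x
      have e0 : (fun i : Fin n => sn h x i.castSucc) = h := funext fun i => sn_castSucc h x i
      rw [freeze, e0, sn_last]
    simp_rw [e']
    by_cases hh : freeze B c n h ∈ B n
    · simp only [if_pos hh]
      rw [fk_pos _ _ _ _ _ _ hh, freeze_eq B c hdown n h hh]
    · simp only [if_neg hh]
      rw [fk_neg _ _ _ _ _ _ hh, lintegral_const, measure_univ, mul_one]
      exact (lintegral_dirac' c (hG.comp (measurable_sn_right (freeze B c n h)))).symm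

/-! ### Change of measure -/

lemma integrable_bdd {X : Type*} [MeasurableSpace X] {μ : Measure X} [IsFiniteMeasure μ]
    {f : X → ℝ} (hf : Measurable f) {K : ℝ} (hK : ∀ x, |f x| ≤ K) : Integrable f μ :=
  Integrable.of_bound hf.aestronglyMeasurable K
    (Filter.Eventually.of_forall fun q => by simpa using hK _)

lemma abs_integral_le_bdd {X : Type*} [MeasurableSpace X] {μ : Measure X} [IsProbabilityMeasure μ]
    {f : X → ℝ} {K : ℝ} (hK : ∀ x, |f x| ≤ K) : |∫ x, f x ∂μ| ≤ K := by
  have := norm_integral_le_of_norm_le_const (μ := μ) (f := f) (C := K)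
    (Filter.Eventually.of_forall fun q => by simpa using hK _)
  simpa using this

lemma exp_bdd {X : Type*} {f : X → ℝ} {K : ℝ} (hK : ∀ x, |f x| ≤ K) (x : X) :
    |Real.exp (f x)| ≤ Real.exp K := by
  rw [abs_of_pos (Real.exp_pos _)]
  exact Real.exp_le_exp.2 ((abs_le.1 (hK x)).2)

lemma chain_dv {X : Type*} [MeasurableSpace X] (κ₁ κ₂ : (t : ℕ) → Kernel (Fin t → X) X)
    [∀ t, IsMarkovKernel (κ₁ t)] [∀ t, IsMarkovKernel (κ₂ t)]
    (D : X → ℝ) (hD : Measurable D) (L : ℝ) (hL : ∀ x, |D x| ≤ L)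
    (hstep : ∀ (n : ℕ) (h : Fin n → X) (ψ : X → ℝ), Measurable ψ → (∃ K, ∀ x, |ψ x| ≤ K) →
      Real.exp (∫ x, (ψ x - D x) ∂(κ₁ n h)) ≤ ∫ x, Real.exp (ψ x) ∂(κ₂ n h))
    (n : ℕ) (φ : (Fin n → X) → ℝ) (hφ : Measurable φ) (K : ℝ) (hK : ∀ h, |φ h| ≤ K) :
    Real.exp (∫ h, (φ h - ∑ i, D (h i)) ∂(chain κ₁ n)) ≤ ∫ h, Real.exp (φ h) ∂(chain κ₂ n) := by
  induction n generalizing K with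
  | zero =>
    simp only [chain, Finset.univ_eq_empty, Finset.sum_empty, sub_zero]
    rw [integral_dirac' _ _ hφ.stronglyMeasurable,
      integral_dirac' _ _ (Measurable.exp hφ).stronglyMeasurable]
  | succ n ih =>
    set φ' : (Fin n → X) → ℝ := fun h => ∫ x, (φ (sn h x) - D x) ∂(κ₁ n h) with hφ'
    have hbd : ∀ h : Fin n → X, ∀ x, |φ (sn h x) - D x| ≤ K + L := fun h x =>
      (abs_sub _ _).trans (add_le_add (hK _) (hL _))
    have hm' : Measurable φ' := by
      have : StronglyMeasurable fun q : (Fin n → X) × X => φ (sn q.1 q.2) - D q.2 :=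
        ((hφ.comp measurable_sn).sub (hD.comp measurable_snd)).stronglyMeasurable
      exact (this.integral_kernel_prod_right' (κ := κ₁ n)).measurable
    have hK' : ∀ h, |φ' h| ≤ K + L := fun h => abs_integral_le_bdd (hbd h)
    have h1 := ih φ' hm' (K + L) hK'
    have hsum : ∀ m (h : Fin m → X), |∑ i, D (h i)| ≤ m * L := by
      intro m h
      refine (Finset.abs_sum_le_sum_abs _ _).trans ?_
      refine (Finset.sum_le_sum fun i _ => hL (h i)).trans ?_
      simp
    have hsm : ∀ m, Measurable fun h : Fin m → X => ∑ i, D (h i) := fun m =>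
      Finset.measurable_sum _ fun i _ => hD.comp (measurable_pi_apply i)
    have e1 : ∫ h, (φ h - ∑ i, D (h i)) ∂(chain κ₁ (n+1))
        = ∫ h, (φ' h - ∑ i, D (h i)) ∂(chain κ₁ n) := by
      rw [integral_chain_succ κ₁ n _ (Measurable.fun_sub hφ (hsm _)) (K + (n+1 : ℕ) * L)
        (fun h => (abs_sub _ _).trans (add_le_add (hK _) (hsum _ _)))]
      refine integral_congr_ae (Filter.Eventually.of_forall fun h => ?_)
      simp only [Fin.sum_univ_castSucc, sn_castSucc, sn_last, hφ']
      have : ∀ x, φ (sn h x) - (∑ i, D (h i) + D x) = (φ (sn h x) - D x) - ∑ i, D (h i) := by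
        intro x; ring
      simp_rw [this]
      rw [integral_sub (f := fun x => φ (sn h x) - D x) (integrable_bdd (Measurable.fun_sub (hφ.comp (measurable_sn_right h)) hD) (hbd h))
        (integrable_const _)]
      simp
    rw [e1]
    refine h1.trans ?_
    rw [integral_chain_succ κ₂ n _ (Measurable.exp hφ) (Real.exp K) (exp_bdd hK)]
    refine integral_mono (integrable_bdd (Measurable.exp hm') (exp_bdd hK')) ?_
      fun h => hstep n h _ (hφ.comp (measurable_sn_right h)) ⟨K, fun x => hK _⟩
    have hm2 : Measurable fun h => ∫ x, Real.exp (φ (sn h x)) ∂(κ₂ n h) := by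
      have : StronglyMeasurable fun q : (Fin n → X) × X => Real.exp (φ (sn q.1 q.2)) :=
        (Measurable.exp (hφ.comp measurable_sn)).stronglyMeasurable
      exact (this.integral_kernel_prod_right' (κ := κ₂ n)).measurable
    exact integrable_bdd hm2 (K := Real.exp K)
      (fun h => abs_integral_le_bdd (fun x => exp_bdd hK _))

lemma gauss_dv (μ ν : ℝ) (ψ : ℝ → ℝ) (hψ : Measurable ψ) (K : ℝ) (hK : ∀ x, |ψ x| ≤ K) :
    Real.exp (∫ r, ψ r ∂(gaussianReal μ 1) - (ν - μ)^2 / 2)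
      ≤ ∫ r, Real.exp (ψ r) ∂(gaussianReal ν 1) := by
  have e : ∫ r, Real.exp (ψ r) ∂(gaussianReal ν 1)
      = ∫ r, Real.exp (ψ r + ((ν - μ) * (r - μ) - (ν - μ)^2 / 2)) ∂(gaussianReal μ 1) := by
    rw [integral_gaussianReal_eq_integral_smul (by norm_num),
      integral_gaussianReal_eq_integral_smul (by norm_num)]
    refine integral_congr_ae (Filter.Eventually.of_forall fun r => ?_)
    simp only [gaussianPDFReal, smul_eq_mul, mul_assoc, ← Real.exp_add]
    congr 2
    simp
    ring
  have hid : Integrable (fun r : ℝ => r) (gaussianReal μ 1) :=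
    (memLp_id_gaussianReal 1).integrable (by simp)
  have hψi : Integrable ψ (gaussianReal μ 1) := integrable_bdd hψ hK
  have hlin : Integrable (fun r : ℝ => (ν - μ) * (r - μ) - (ν - μ)^2 / 2) (gaussianReal μ 1) :=
    ((hid.sub (integrable_const _)).const_mul _).sub (integrable_const _)
  have hexp : Integrable (fun r : ℝ => Real.exp (ψ r + ((ν - μ) * (r - μ) - (ν - μ)^2 / 2)))
      (gaussianReal μ 1) := by
    have h1 : Integrable (fun r : ℝ => Real.exp ((ν - μ) * r)) (gaussianReal μ 1) :=
      integrable_exp_mul_gaussianReal _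
    have h2 := (h1.const_mul (Real.exp (- (ν - μ) * μ - (ν - μ)^2 / 2))).bdd_mul
      (f := fun r => Real.exp (ψ r)) (c := Real.exp K)
      (Measurable.exp hψ).aestronglyMeasurable
      (Filter.Eventually.of_forall fun r => by simpa using exp_bdd hK r)
    refine h2.congr (Filter.Eventually.of_forall fun r => ?_)
    simp only [← Real.exp_add]
    congr 1
    ring
  have hj := convexOn_exp.map_integral_le (μ := gaussianReal μ 1)
    Real.continuous_exp.continuousOn isClosed_univ
    (Filter.Eventually.of_forall fun _ => Set.mem_univ _) (hψi.add hlin) hexp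
  rw [e]
  refine le_trans (le_of_eq ?_) hj
  congr 1
  simp only [Pi.add_apply]
  rw [integral_add hψi hlin,
    integral_sub (f := fun r => (ν - μ) * (r - μ)) ((hid.sub (integrable_const _)).const_mul _) (integrable_const _),
    integral_const_mul, integral_sub hid (integrable_const _), integral_id_gaussianReal]
  simp
  ring

lemma exp_jensen {X : Type*} [MeasurableSpace X] (μ : Measure X) [IsProbabilityMeasure μ]
    (ψ : X → ℝ) (hψ : Measurable ψ) (K : ℝ) (hK : ∀ x, |ψ x| ≤ K) :
    Real.exp (∫ x, ψ x ∂μ) ≤ ∫ x, Real.exp (ψ x) ∂μ :=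
  convexOn_exp.map_integral_le Real.continuous_exp.continuousOn isClosed_univ
    (Filter.Eventually.of_forall fun _ => Set.mem_univ _) (integrable_bdd hψ hK)
    (integrable_bdd (Measurable.exp hψ) (exp_bdd hK))

lemma step_dv {P : Type*} [MeasurableSpace P] (g f : P → ℝ) (hg : Measurable g)
    (hf : Measurable f) (hb : ∀ x, |f x - g x| ≤ 1)
    (alg : (t : ℕ) → Kernel (Fin t → P × ℝ) P) [∀ t, IsMarkovKernel (alg t)] (n : ℕ)
    (h : Fin n → P × ℝ) (ψ : P × ℝ → ℝ) (hψ : Measurable ψ) (K : ℝ) (hK : ∀ x, |ψ x| ≤ K) :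
    Real.exp (∫ x, (ψ x - (f x.1 - g x.1)^2 / 2) ∂(step g hg alg n h))
      ≤ ∫ x, Real.exp (ψ x) ∂(step f hf alg n h) := by
  have hDb : ∀ a, |(f a - g a)^2 / 2| ≤ 1 := by
    intro a
    have := sq_le_one_iff_abs_le_one _ |>.2 (hb a)
    rw [abs_of_nonneg (by positivity)]
    linarith
  have hDm : Measurable fun a => (f a - g a)^2 / 2 := ((hf.sub hg).pow_const 2).div_const 2
  have hb2 : ∀ x : P × ℝ, |ψ x - (f x.1 - g x.1)^2 / 2| ≤ K + 1 := fun x =>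
      (abs_sub _ _).trans (add_le_add (hK _) (hDb _))
  have hm2 : Measurable fun x : P × ℝ => ψ x - (f x.1 - g x.1)^2 / 2 :=
    hψ.sub (hDm.comp measurable_fst)
  rw [integral_step g hg alg n h _ hm2 (K+1) hb2,
    integral_step f hf alg n h _ (Measurable.exp hψ) (Real.exp K) (exp_bdd hK)]
  have hm3 : Measurable fun a => ∫ r, (ψ (a, r) - (f a - g a)^2 / 2) ∂(gaussianReal (g a) 1) :=
    (hm2.stronglyMeasurable.integral_kernel_prod_right' (κ := gk g hg)).measurable
  have hm4 : Measurable fun a => ∫ r, Real.exp (ψ (a, r)) ∂(gaussianReal (f a) 1) :=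
    ((Measurable.exp hψ).stronglyMeasurable.integral_kernel_prod_right'
      (κ := gk f hf)).measurable
  have hb3 : ∀ a, |∫ r, (ψ (a, r) - (f a - g a)^2 / 2) ∂(gaussianReal (g a) 1)| ≤ K + 1 :=
    fun a => abs_integral_le_bdd fun r => hb2 (a, r)
  refine (exp_jensen _ _ hm3 (K+1) hb3).trans ?_
  refine integral_mono (integrable_bdd (Measurable.exp hm3) (exp_bdd hb3))
    (integrable_bdd hm4 (K := Real.exp K)
      (fun a => abs_integral_le_bdd (fun x => exp_bdd hK _))) fun a => ?_
  have hma : Measurable fun r : ℝ => ψ (a, r) := hψ.comp measurable_prodMk_left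
  have := gauss_dv (g a) (f a) (fun r => ψ (a, r)) hma K (fun r => hK _)
  refine le_trans (le_of_eq ?_) this
  simp only
  rw [integral_sub (integrable_bdd hma (fun r => hK _)) (integrable_const _)]
  simp

lemma fk_dv {P : Type*} [MeasurableSpace P] (g f : P → ℝ) (hg : Measurable g)
    (hf : Measurable f) (hb : ∀ x, |f x - g x| ≤ 1)
    (alg : (t : ℕ) → Kernel (Fin t → P × ℝ) P) [∀ t, IsMarkovKernel (alg t)]
    (B : (n : ℕ) → Set (Fin n → P × ℝ)) (hB : ∀ n, MeasurableSet (B n)) (c : P × ℝ) (n : ℕ)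
    (h : Fin n → P × ℝ) (ψ : P × ℝ → ℝ) (hψ : Measurable ψ) (hK : ∃ K, ∀ x, |ψ x| ≤ K) :
    Real.exp (∫ x, (ψ x - (f x.1 - g x.1)^2 / 2) ∂(fk (step g hg alg) B hB c n h))
      ≤ ∫ x, Real.exp (ψ x) ∂(fk (step f hf alg) B hB c n h) := by
  obtain ⟨K, hK⟩ := hK
  by_cases hh : h ∈ B n
  · rw [fk_pos _ _ _ _ _ _ hh, fk_pos _ _ _ _ _ _ hh]
    exact step_dv g f hg hf hb alg n h ψ hψ K hK
  · rw [fk_neg _ _ _ _ _ _ hh, fk_neg _ _ _ _ _ _ hh]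
    have hDm : Measurable fun x : P × ℝ => (f x.1 - g x.1)^2 / 2 :=
      (((hf.comp measurable_fst).sub (hg.comp measurable_fst)).pow_const 2).div_const 2
    rw [integral_dirac' _ _ (Measurable.fun_sub hψ hDm).stronglyMeasurable,
      integral_dirac' _ _ (Measurable.exp hψ).stronglyMeasurable]
    apply Real.exp_le_exp.2
    have := sq_nonneg (f c.1 - g c.1)
    linarith

/-- Pinsker-type bound for the frozen chains. -/
lemma frozen_pinsker {P : Type*} [MeasurableSpace P] (g f : P → ℝ) (hg : Measurable g)
    (hf : Measurable f) (hb : ∀ x, |f x - g x| ≤ 1)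
    (alg : (t : ℕ) → Kernel (Fin t → P × ℝ) P) [∀ t, IsMarkovKernel (alg t)]
    (B : (n : ℕ) → Set (Fin n → P × ℝ)) (hB : ∀ n, MeasurableSet (B n)) (c : P × ℝ) (n : ℕ)
    (b : ℝ) (hb0 : 0 < b)
    (hkl : ∫ h, (∑ i, (f (h i).1 - g (h i).1)^2) ∂(chain (fk (step g hg alg) B hB c) n) ≤ 4 * b^2)
    (H : Set (Fin n → P × ℝ)) (hH : MeasurableSet H) :
    (chain (fk (step g hg alg) B hB c) n).real H
      ≤ (chain (fk (step f hf alg) B hB c) n).real H + b := by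
  set μ₁ := chain (fk (step g hg alg) B hB c) n
  set μ₂ := chain (fk (step f hf alg) B hB c) n
  set l : ℝ := 4 * b with hl
  have hDm : Measurable fun x : P × ℝ => (f x.1 - g x.1)^2 / 2 :=
      (((hf.comp measurable_fst).sub (hg.comp measurable_fst)).pow_const 2).div_const 2
  have hDb : ∀ x : P × ℝ, |(f x.1 - g x.1)^2 / 2| ≤ 1 := by
    intro x
    have := sq_le_one_iff_abs_le_one _ |>.2 (hb x.1)
    rw [abs_of_nonneg (by positivity)]
    linarith
  have hIm : Measurable (H.indicator (fun _ => (1:ℝ))) := measurable_const.indicator hH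
  have hIb : ∀ h, H.indicator (fun _ => (1:ℝ)) h ∈ Set.Icc (0:ℝ) 1 := by
    intro h
    by_cases hh : h ∈ H <;> simp [hh]
  have hφb : ∀ h, |l * H.indicator (fun _ => (1:ℝ)) h| ≤ l := by
    intro h
    have := hIb h
    rw [abs_of_nonneg (mul_nonneg (by positivity) this.1)]
    nlinarith [this.2]
  have hdv := chain_dv (fk (step g hg alg) B hB c) (fk (step f hf alg) B hB c)
    (fun x => (f x.1 - g x.1)^2 / 2) hDm 1 hDb
    (fun m h ψ hψ hK => fk_dv g f hg hf hb alg B hB c m h ψ hψ hK) n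
    (fun h => l * H.indicator (fun _ => (1:ℝ)) h) (hIm.const_mul _) l hφb
  have hsumi : Integrable (fun h : Fin n → P × ℝ => ∑ i, (f (h i).1 - g (h i).1)^2 / 2) μ₁ := by
    refine integrable_finsetSum _ fun i _ => ?_
    exact integrable_bdd (hDm.comp (measurable_pi_apply i)) (K := 1) (fun h => hDb (h i))
  have i1 : ∫ h, H.indicator (fun _ => (1:ℝ)) h ∂μ₁ = μ₁.real H := by
    rw [integral_indicator_const _ hH]; simp
  have i2 : ∫ h, H.indicator (fun _ => (1:ℝ)) h ∂μ₂ = μ₂.real H := by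
    rw [integral_indicator_const _ hH]; simp
  have hsub := (hasSubgaussianMGF_of_mem_Icc (μ := μ₂) (a := 0) (b := 1) hIm.aemeasurable
    (Filter.Eventually.of_forall hIb)).mgf_le l
  rw [i2] at hsub
  have e2 : mgf (fun h => H.indicator (fun _ => (1:ℝ)) h - μ₂.real H) μ₂ l
      = Real.exp (- (l * μ₂.real H)) * ∫ h, Real.exp (l * H.indicator (fun _ => (1:ℝ)) h) ∂μ₂ := by
    rw [mgf, ← integral_const_mul]
    refine integral_congr_ae (Filter.Eventually.of_forall fun h => ?_)
    simp only [← Real.exp_add]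
    congr 1
    ring
  rw [e2] at hsub
  have h3 := (mul_le_mul_of_nonneg_left hdv (Real.exp_pos (- (l * μ₂.real H))).le).trans hsub
  rw [← Real.exp_add, Real.exp_le_exp,
    integral_sub (integrable_bdd (hIm.const_mul _) hφb) hsumi, integral_const_mul, i1] at h3
  have e3 : ∫ h, (∑ i, (f (h i).1 - g (h i).1)^2 / 2) ∂μ₁
      = (∫ h, (∑ i, (f (h i).1 - g (h i).1)^2) ∂μ₁) / 2 := by
    rw [← integral_div]
    simp_rw [Finset.sum_div]
  rw [e3] at h3
  norm_num at h3
  rw [hl] at h3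
  by_contra hcon
  push Not at hcon
  nlinarith

/-! ### The stopping rule -/

/-- Histories whose accumulated deficit is still below the threshold. -/
def Bset {P : Type*} (g : P → ℝ) (b θ : ℝ) (n : ℕ) : Set (Fin n → P × ℝ) :=
  {h | ∑ i, (b - g (h i).1) < θ}

lemma Bset_meas {P : Type*} [MeasurableSpace P] (g : P → ℝ) (hg : Measurable g) (b θ : ℝ)
    (n : ℕ) : MeasurableSet (Bset g b θ n) := by
  refine measurableSet_lt (Finset.measurable_sum _ fun i _ => ?_) measurable_const
  exact measurable_const.sub (hg.comp (measurable_fst.comp (measurable_pi_apply i)))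

lemma Bset_down {P : Type*} (g : P → ℝ) (b θ : ℝ) (hb : ∀ x, g x ≤ b) (n : ℕ)
    (h : Fin n → P × ℝ) (x : P × ℝ) (hx : sn h x ∈ Bset g b θ (n+1)) : h ∈ Bset g b θ n := by
  simp only [Bset, Set.mem_setOf_eq, Fin.sum_univ_castSucc, sn_castSucc, sn_last] at hx ⊢
  linarith [hb x.1]

lemma deficit_le {P : Type*} (g : P → ℝ) (b θ η : ℝ) (h1 : ∀ x, b - g x ≤ 1) (c : P × ℝ)
    (hc : b - g c.1 ≤ η) (hη : 0 ≤ η) (hθ : 0 ≤ θ) (n : ℕ) (h : Fin n → P × ℝ) :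
    ∑ i, (b - g ((freeze (Bset g b θ) c n h) i).1) ≤ θ + 1 + n * η := by
  induction n with
  | zero => simp; linarith
  | succ n ih =>
    rw [freeze, Fin.sum_univ_castSucc]
    simp only [sn_castSucc, sn_last]
    have h2 := ih (fun i => h i.castSucc)
    have h3 : (0:ℝ) ≤ n * η := by positivity
    push_cast
    by_cases hh : freeze (Bset g b θ) c n (fun i => h i.castSucc) ∈ Bset g b θ n
    · rw [if_pos hh]
      have h4 := h1 (h (Fin.last n)).1
      have h5 : ∑ i, (b - g ((freeze (Bset g b θ) c n (fun i => h i.castSucc)) i).1) < θ := hh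
      linarith
    · rw [if_neg hh]
      linarith

lemma dead_prefix {P : Type*} (g : P → ℝ) (b θ : ℝ) (hb : ∀ x, g x ≤ b) (c : P × ℝ)
    (hθ : 0 < θ) (n : ℕ) (h : Fin n → P × ℝ)
    (hd : freeze (Bset g b θ) c n h ∉ Bset g b θ n) :
    ∃ k : ℕ, k ≤ n ∧ (∀ i : Fin n, i.val < k → freeze (Bset g b θ) c n h i = h i) ∧
      θ ≤ ∑ i : Fin n, (if i.val < k then b - g (h i).1 else 0) := by
  induction n with
  | zero => exact absurd (by simpa [Bset] using hθ) hd
  | succ n ih =>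
    by_cases hh : freeze (Bset g b θ) c n (fun i => h i.castSucc) ∈ Bset g b θ n
    · have e : freeze (Bset g b θ) c (n+1) h = h := by
        rw [freeze, if_pos hh, freeze_eq _ c (Bset_down g b θ hb) n _ hh, sn_init]
      refine ⟨n+1, le_rfl, fun i _ => by rw [e], ?_⟩
      rw [e] at hd
      simp only [Bset, Set.mem_setOf_eq, not_lt] at hd
      refine hd.trans (le_of_eq (Finset.sum_congr rfl fun i _ => ?_))
      rw [if_pos i.isLt]
    · obtain ⟨k, hk, h1, h2⟩ := ih _ hh
      refine ⟨k, hk.trans n.le_succ, fun i => ?_, ?_⟩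
      · refine Fin.lastCases ?_ (fun j => ?_) i
        · intro hi
          simp at hi
          omega
        · intro hi
          rw [freeze, sn_castSucc]
          exact h1 j (by simpa using hi)
      · rw [Fin.sum_univ_castSucc]
        simp only [Fin.val_castSucc, Fin.val_last]
        rw [if_neg (not_lt.2 hk)]
        linarith

/-! ### Averaging and selection -/

lemma exists_avg {P : Type*} [MeasurableSpace P] (T : ℕ) (hT : 1 ≤ T)
    (ν : Measure (Fin T → P × ℝ)) [IsProbabilityMeasure ν] :
    ∃ p : ProbabilityMeasure P, ∀ G : P → ℝ, Measurable G → (∃ K, ∀ x, |G x| ≤ K) →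
      ∫ x, G x ∂(p : Measure P) = (1 / (T:ℝ)) * ∫ h, (∑ i, G (h i).1) ∂ν := by
  have hm : ∀ i : Fin T, Measurable fun h : Fin T → P × ℝ => (h i).1 := fun i =>
    measurable_fst.comp (measurable_pi_apply i)
  let q : Measure P := (T : ℝ≥0∞)⁻¹ • ∑ i : Fin T, ν.map (fun h => (h i).1)
  have hT0 : (T : ℝ≥0∞) ≠ 0 := by simp; omega
  have hq : IsProbabilityMeasure q := by
    constructor
    have : ∀ i : Fin T, (ν.map (fun h => (h i).1)) Set.univ = 1 := by
      intro i
      rw [Measure.map_apply (hm i) MeasurableSet.univ]; simp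
    simp only [q, Measure.smul_apply, Measure.finsetSum_apply, this]
    simp [ENNReal.inv_mul_cancel hT0 (ENNReal.natCast_ne_top T)]
  refine ⟨⟨q, hq⟩, fun G hG ⟨K, hK⟩ => ?_⟩
  change ∫ x, G x ∂q = _
  have hi : ∀ i : Fin T, IsFiniteMeasure (ν.map (fun h => (h i).1)) := fun i => inferInstance
  simp only [q]
  rw [integral_smul_measure, integral_finsetSum_measure
    (fun i _ => integrable_bdd hG hK), integral_finsetSum
    (f := fun (i : Fin T) (h : Fin T → P × ℝ) => G (h i).1) _ (fun i _ => integrable_bdd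
      (hG.comp (hm i)) (fun h => hK _))]
  simp only [ENNReal.toReal_inv, ENNReal.toReal_natCast, smul_eq_mul, one_div]
  congr 1
  refine Finset.sum_congr rfl fun i _ => ?_
  rw [integral_map (hm i).aemeasurable hG.aestronglyMeasurable]

lemma abs_le_one_of {P : Type*} {f : P → ℝ} (hf : ∀ x, f x ∈ Set.Icc (0:ℝ) 1) (x : P) :
    |f x| ≤ 1 := by
  rw [abs_of_nonneg (hf x).1]; exact (hf x).2

lemma sup_mem {P : Type*} {f : P → ℝ} (hf : ∀ x, f x ∈ Set.Icc (0:ℝ) 1) :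
    (⨆ x, f x) ∈ Set.Icc (0:ℝ) 1 :=
  ⟨Real.iSup_nonneg fun x => (hf x).1, Real.iSup_le (fun x => (hf x).2) zero_le_one⟩

lemma le_sup_of {P : Type*} {f : P → ℝ} (hf : ∀ x, f x ∈ Set.Icc (0:ℝ) 1) (x : P) :
    f x ≤ ⨆ x, f x :=
  le_ciSup (f := f) ⟨1, by rintro _ ⟨y, rfl⟩; exact (hf y).2⟩ x

lemma dec_select {P : Type*} [MeasurableSpace P] (F : Set (P → ℝ))
    (hF : ∀ f ∈ F, Measurable f ∧ ∀ x, f x ∈ Set.Icc (0:ℝ) 1)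
    (γ : ℝ) (hγ : γ ∈ Set.Ioc (0:ℝ) 1) (ε η : ℝ) (hη : 0 < η) :
    ∃ g : P → ℝ, Measurable g ∧ (∀ x, g x ∈ Set.Icc (0:ℝ) 1) ∧
      ∀ p : ProbabilityMeasure P, ∃ f ∈ F ∪ {g},
        ∫ x, (f x - g x)^2 ∂(p : Measure P) ≤ ε^2 ∧
        dec γ ε F - η < ∫ x, (γ * (⨆ y, f y) - f x) ∂(p : Measure P) := by
  haveI : Nonempty {g : P → ℝ // Measurable g ∧ ∀ x, g x ∈ Set.Icc (0:ℝ) 1} :=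
    ⟨⟨fun _ => 0, measurable_const, by simp⟩⟩
  have h0 : dec γ ε F - η < dec γ ε F := by linarith
  obtain ⟨⟨g, hg, hg1⟩, h1⟩ := exists_lt_of_lt_ciSup (show dec γ ε F - η <
    ⨆ fbar : {g : P → ℝ // Measurable g ∧ ∀ x, g x ∈ Set.Icc (0:ℝ) 1},
    decConstrained γ ε (F ∪ {(fbar : P → ℝ)}) fbar from h0)
  refine ⟨g, hg, hg1, fun p => ?_⟩
  have hall : ∀ f ∈ F ∪ {g}, Measurable f ∧ ∀ x, f x ∈ Set.Icc (0:ℝ) 1 := by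
    rintro f (hf | hf)
    · exact hF f hf
    · rw [Set.mem_singleton_iff.1 hf]; exact ⟨hg, hg1⟩
  have hbd : ∀ (p : ProbabilityMeasure P), ∀ f ∈ F ∪ {g},
      |∫ x, (γ * (⨆ y, f y) - f x) ∂(p : Measure P)| ≤ 2 := by
    intro p f hf
    refine abs_integral_le_bdd fun x => ?_
    have h2 := sup_mem (hall f hf).2
    have h3 := (hall f hf).2 x
    rw [abs_le]
    constructor <;> nlinarith [hγ.1, hγ.2, h2.1, h2.2, h3.1, h3.2]
  have hgin : ∀ p : ProbabilityMeasure P, g ∈ F ∪ {g} ∧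
      ∫ x, (g x - g x)^2 ∂(p : Measure P) ≤ ε^2 := by
    intro p
    refine ⟨Or.inr rfl, ?_⟩
    simp only [sub_self, ne_eq, OfNat.ofNat_ne_zero, not_false_eq_true, zero_pow, integral_zero]
    positivity
  have hbdd : ∀ p : ProbabilityMeasure P, BddAbove (Set.range fun
      f : {f : P → ℝ // f ∈ F ∪ {g} ∧ ∫ x, (f x - g x)^2 ∂(p : Measure P) ≤ ε^2} =>
      ∫ x, (γ * (⨆ y, (f : P → ℝ) y) - (f : P → ℝ) x) ∂(p : Measure P)) := by
    intro p
    refine ⟨2, ?_⟩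
    rintro _ ⟨f, rfl⟩
    exact (abs_le.1 (hbd p f.1 f.2.1)).2
  have h2 := h1.trans_le (ciInf_le (α := ℝ) (ι := ProbabilityMeasure P) ⟨-2, by
    rintro _ ⟨p, rfl⟩
    exact (abs_le.1 (hbd p g (hgin p).1)).1.trans (le_ciSup (hbdd p) ⟨g, hgin p⟩)⟩ p)
  haveI : Nonempty {f : P → ℝ // f ∈ F ∪ {g} ∧ ∫ x, (f x - g x)^2 ∂(p : Measure P) ≤ ε^2} :=
    ⟨⟨g, hgin p⟩⟩
  obtain ⟨f, h3⟩ := exists_lt_of_lt_ciSup h2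
  exact ⟨f.1, f.2.1, f.2.2, h3⟩

lemma pass_select {P : Type*} [MeasurableSpace P] (F : Set (P → ℝ))
    (hF : ∀ f ∈ F, Measurable f ∧ ∀ x, f x ∈ Set.Icc (0:ℝ) 1)
    (γ Δ ε η : ℝ) (hε : 0 < ε) (hη : 0 ≤ η) (b : ℝ) (hb : 0 < b)
    (T : ℕ) (hT : 1 ≤ T) (hTε : T * ε^2 ≤ 4 * b^2)
    (alg : (t : ℕ) → Kernel (Fin t → P × ℝ) P) [∀ t, IsMarkovKernel (alg t)]
    (g : P → ℝ) (hg : Measurable g) (hg1 : ∀ x, g x ∈ Set.Icc (0:ℝ) 1)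
    (hsel : ∀ p : ProbabilityMeasure P, ∃ f ∈ F ∪ {g},
        ∫ x, (f x - g x)^2 ∂(p : Measure P) ≤ ε^2 ∧
        Δ - η < ∫ x, (γ * (⨆ y, f y) - f x) ∂(p : Measure P))
    (c : P × ℝ) (hc : (⨆ x, g x) - g c.1 ≤ η) (θ : ℝ) (hθ : 0 ≤ θ)
    (hθ2 : T * (γ * (⨆ x, g x) - ⨆ x, g x) + θ + 1 + T * η ≤ T * (Δ - η)) :
    ∃ f ∈ F,
      ∫ h, (∑ i, f (h i).1) ∂(chain (fk (step g hg alg) (Bset g (⨆ x, g x) θ)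
          (Bset_meas g hg _ θ) c) T) < T * (γ * (⨆ x, f x) - Δ + η) ∧
      ∫ h, (∑ i, |f (h i).1 - g (h i).1|) ∂(chain (fk (step g hg alg) (Bset g (⨆ x, g x) θ)
          (Bset_meas g hg _ θ) c) T) ≤ T * ε ∧
      γ * (⨆ x, g x) - ε ≤ γ * (⨆ x, f x) ∧
      ∀ (hf : Measurable f) (H : Set (Fin T → P × ℝ)), MeasurableSet H →
        (chain (fk (step g hg alg) (Bset g (⨆ x, g x) θ) (Bset_meas g hg _ θ) c) T).real H ≤
        (chain (fk (step f hf alg) (Bset g (⨆ x, g x) θ) (Bset_meas g hg _ θ) c) T).real H + b := by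
  set B := (⨆ x, g x) with hB
  have hT0 : (0:ℝ) < T := by exact_mod_cast hT
  have hmi : ∀ i : Fin T, Measurable fun h : Fin T → P × ℝ => (h i).1 := fun i =>
    measurable_fst.comp (measurable_pi_apply i)
  set ν := chain (fk (step g hg alg) (Bset g B θ) (Bset_meas g hg _ θ) c) T with hν
  have hν' : ν = (chain (step g hg alg) T).map (freeze (Bset g B θ) c T) :=
    (map_freeze _ _ _ _ (Bset_down g B θ (le_sup_of hg1)) T).symm
  have hdef : T * B - θ - 1 - T * η ≤ ∫ h, (∑ i, g (h i).1) ∂ν := by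
    have hsm : Measurable fun h : Fin T → P × ℝ => ∑ i, g (h i).1 :=
      Finset.measurable_sum _ fun i _ => hg.comp (hmi i)
    have hfm := freeze_measurable (Bset g B θ) (Bset_meas g hg _ θ) c T
    rw [hν', integral_map hfm.aemeasurable hsm.aestronglyMeasurable]
    have hp : ∀ h, T * B - θ - 1 - T * η ≤ ∑ i, g ((freeze (Bset g B θ) c T h) i).1 := by
      intro h
      have := deficit_le g B θ η (fun x => by linarith [(hg1 x).1, (sup_mem hg1).2]) c hc hη hθ T h
      rw [Finset.sum_sub_distrib] at this
      simp at this
      linarith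
    have h1 : Integrable (fun h => ∑ i, g ((freeze (Bset g B θ) c T h) i).1)
        (chain (step g hg alg) T) :=
      integrable_finsetSum _ fun i _ => integrable_bdd ((hg.comp (hmi i)).comp hfm)
        (fun h => abs_le_one_of hg1 _)
    have h2 := integral_mono (integrable_const (T * B - θ - 1 - T * η)) h1 hp
    simpa using h2
  obtain ⟨p, hp⟩ := exists_avg T hT ν
  obtain ⟨f, hfF, h1, h2⟩ := hsel p
  have hall : Measurable f ∧ ∀ x, f x ∈ Set.Icc (0:ℝ) 1 := by
    rcases hfF with hf | hf
    · exact hF f hf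
    · rw [Set.mem_singleton_iff.1 hf]; exact ⟨hg, hg1⟩
  obtain ⟨hfm, hf1⟩ := hall
  have hd1 : ∀ x, |f x - g x| ≤ 1 := by
    intro x
    rw [abs_le]
    constructor <;> linarith [(hf1 x).1, (hf1 x).2, (hg1 x).1, (hg1 x).2]
  rw [integral_sub (integrable_const _) (integrable_bdd hfm (abs_le_one_of hf1)),
    hp f hfm ⟨1, abs_le_one_of hf1⟩] at h2
  simp only [integral_const, probReal_univ, smul_eq_mul, one_mul] at h2
  have hd2 : ∀ x, |(f x - g x)^2| ≤ 1 := by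
    intro x
    rw [abs_of_nonneg (by positivity)]
    exact sq_le_one_iff_abs_le_one _ |>.2 (hd1 x)
  have hdm2 : Measurable fun x => (f x - g x)^2 := (hfm.sub hg).pow_const 2
  rw [hp _ hdm2 ⟨1, hd2⟩, one_div, inv_mul_le_iff₀ hT0] at h1
  have h2' : ∫ h, (∑ i, f (h i).1) ∂ν < T * (γ * (⨆ x, f x) - Δ + η) := by
    have : (1 / (T:ℝ)) * ∫ h, (∑ i, f (h i).1) ∂ν < γ * (⨆ x, f x) - Δ + η := by linarith
    rwa [one_div, inv_mul_lt_iff₀ hT0] at this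
  have habsi : Integrable (fun h : Fin T → P × ℝ => ∑ i, |f (h i).1 - g (h i).1|) ν :=
    integrable_finsetSum _ fun i _ => integrable_bdd (K := 1)
      (((hfm.sub hg).abs).comp (hmi i)) (fun h => by simpa using hd1 _)
  have hsqi : Integrable (fun h : Fin T → P × ℝ => ∑ i, (f (h i).1 - g (h i).1)^2) ν :=
    integrable_finsetSum _ fun i _ => integrable_bdd (hdm2.comp (hmi i)) (fun h => hd2 _)
  have hfi : Integrable (fun h : Fin T → P × ℝ => ∑ i, f (h i).1) ν :=
    integrable_finsetSum _ fun i _ => integrable_bdd (hfm.comp (hmi i))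
      (fun h => abs_le_one_of hf1 _)
  have hgi : Integrable (fun h : Fin T → P × ℝ => ∑ i, g (h i).1) ν :=
    integrable_finsetSum _ fun i _ => integrable_bdd (hg.comp (hmi i))
      (fun h => abs_le_one_of hg1 _)
  have habs : ∫ h, (∑ i, |f (h i).1 - g (h i).1|) ∂ν ≤ T * ε := by
    have hpt : ∀ h : Fin T → P × ℝ, ∑ i, |f (h i).1 - g (h i).1| ≤
        (1 / (2 * ε)) * (∑ i, (f (h i).1 - g (h i).1)^2) + T * ε / 2 := by
      intro h
      have : ∀ i, |f (h i).1 - g (h i).1| ≤ (1 / (2 * ε)) * (f (h i).1 - g (h i).1)^2 + ε / 2 := by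
        intro i
        have h3 : |f (h i).1 - g (h i).1| * (2 * ε) ≤ (f (h i).1 - g (h i).1)^2 + ε^2 := by
          rw [← sq_abs (f (h i).1 - g (h i).1)]
          nlinarith [sq_nonneg (|f (h i).1 - g (h i).1| - ε)]
        have h4 : (1 / (2 * ε)) * (f (h i).1 - g (h i).1)^2 + ε / 2
          = ((f (h i).1 - g (h i).1)^2 + ε^2) / (2 * ε) := by field_simp
        rw [h4, le_div_iff₀ (by positivity)]
        exact h3
      refine (Finset.sum_le_sum fun i _ => this i).trans (le_of_eq ?_)
      rw [Finset.sum_add_distrib, ← Finset.mul_sum]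
      simp
      ring
    have h3 := integral_mono habsi ((hsqi.const_mul _).add (integrable_const _)) hpt
    simp only [Pi.add_apply] at h3
    rw [integral_add (hsqi.const_mul _) (integrable_const _), integral_const_mul] at h3
    simp only [integral_const, probReal_univ, smul_eq_mul, one_mul] at h3
    refine h3.trans ?_
    have h4 : (1 / (2 * ε)) * ∫ h, (∑ i, (f (h i).1 - g (h i).1)^2) ∂ν
        ≤ (1 / (2 * ε)) * (T * ε^2) := by
      gcongr
    have h5 : (1 / (2 * ε)) * (T * ε^2) = T * ε / 2 := by field_simp
    linarith
  have hfg : ∫ h, (∑ i, g (h i).1) ∂ν - T * ε ≤ ∫ h, (∑ i, f (h i).1) ∂ν := by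
    have hpt : ∀ h : Fin T → P × ℝ, ∑ i, g (h i).1 - ∑ i, |f (h i).1 - g (h i).1| ≤
        ∑ i, f (h i).1 := by
      intro h
      rw [← Finset.sum_sub_distrib]
      refine Finset.sum_le_sum fun i _ => ?_
      linarith [neg_abs_le (f (h i).1 - g (h i).1)]
    have h3 := integral_mono (hgi.sub habsi) hfi hpt
    simp only [Pi.sub_apply] at h3
    rw [integral_sub hgi habsi] at h3
    linarith
  have hc3 : γ * B - ε ≤ γ * (⨆ x, f x) := by
    have : (T:ℝ) * (γ * B - ε) ≤ T * (γ * (⨆ x, f x)) := by nlinarith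
    exact le_of_mul_le_mul_left this hT0
  refine ⟨f, ?_, h2', habs, hc3, fun hf H hH => ?_⟩
  · rcases hfF with hf | hf
    · exact hf
    · exfalso
      rw [Set.mem_singleton_iff.1 hf, ← hB] at h2'
      nlinarith
  · exact frozen_pinsker g f hg hf hd1 alg _ _ c T b hb (h1.trans hTε) H hH

/-! ### First pass -/

lemma meas_sum {P : Type*} [MeasurableSpace P] {f : P → ℝ} (hf : Measurable f) (T : ℕ) :
    Measurable fun h : Fin T → P × ℝ => ∑ i, f (h i).1 :=
  Finset.measurable_sum _ fun i _ => hf.comp (measurable_fst.comp (measurable_pi_apply i))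

lemma integrable_sum' {P : Type*} [MeasurableSpace P] {f : P → ℝ} (hf : Measurable f)
    (h1 : ∀ x, |f x| ≤ 1) (T : ℕ) (ν : Measure (Fin T → P × ℝ)) [IsFiniteMeasure ν] :
    Integrable (fun h : Fin T → P × ℝ => ∑ i, f (h i).1) ν :=
  integrable_finsetSum _ fun i _ => integrable_bdd (K := 1)
    (hf.comp (measurable_fst.comp (measurable_pi_apply i))) (fun h => h1 _)

lemma frozen_real {P : Type*} [MeasurableSpace P] (f : P → ℝ) (hf : Measurable f)
    (alg : (t : ℕ) → Kernel (Fin t → P × ℝ) P) [∀ t, IsMarkovKernel (alg t)]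
    (g : P → ℝ) (hg : Measurable g) (hg1 : ∀ x, g x ∈ Set.Icc (0:ℝ) 1)
    (θ : ℝ) (c : P × ℝ) (T : ℕ) (H : Set (Fin T → P × ℝ)) (hH : MeasurableSet H) :
    (chain (fk (step f hf alg) (Bset g (⨆ x, g x) θ) (Bset_meas g hg _ θ) c) T).real H =
    (chain (step f hf alg) T).real (freeze (Bset g (⨆ x, g x) θ) c T ⁻¹' H) := by
  rw [← map_freeze _ _ _ _ (Bset_down g _ θ (le_sup_of hg1)) T, measureReal_def,
    Measure.map_apply (freeze_measurable _ (Bset_meas g hg _ θ) c T) hH, measureReal_def]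

/-- If the run is stopped and the models are close, the model must incur large regret. -/
lemma dead_bound {P : Type*} (γ Δ ε u N c b A θ κ D : ℝ) (hN : 0 < N)
    (hε : 0 < ε) (hNε : 4 ≤ N * ε) (hc : 2 ≤ c) (hγ0 : 0 < γ) (hγ1 : γ ≤ 1)
    (hΔ : 24 * ε ≤ Δ) (hu : 18 * c * ε ≤ u) (hb : 0 ≤ b)
    (hθ : θ = N * (Δ + (1 - γ) * b - 2 * (ε / 8)) - 1) (hκN : κ ≤ N) 
    (hD : θ ≤ D) (hκ : D ≤ κ * b) (hA : γ * b - ε ≤ γ * A) :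
    κ * b - D + 12 * c * ε * N + (N - κ) * A ≤ N * (γ * A - Δ + u) := by
  have h1 : N * (18 * c * ε) ≤ N * u := by gcongr
  have h2 : N * (24 * ε) ≤ N * Δ := by gcongr
  have h3 : 2 * (N * ε) ≤ c * (N * ε) := by nlinarith
  have key : (κ - N * (1 - γ)) * (b - A) ≤ N * ε := by
    rcases le_or_gt b A with h | h
    · have : N * (1 - γ) ≤ κ := by
        by_contra hh
        push Not at hh
        have : κ * b ≤ N * (1 - γ) * b := by gcongr
        nlinarith
      nlinarith
    · have : (κ - N * (1 - γ)) * (b - A) ≤ (N * γ) * (b - A) := by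
        apply mul_le_mul_of_nonneg_right <;> linarith
      have : N * (γ * (b - A)) ≤ N * ε := by
        apply mul_le_mul_of_nonneg_left <;> linarith
      linarith
  nlinarith

lemma pass_one {P : Type*} [MeasurableSpace P] (F : Set (P → ℝ))
    (hF : ∀ f ∈ F, Measurable f ∧ ∀ x, f x ∈ Set.Icc (0:ℝ) 1)
    (γ Δ ε c u L : ℝ) (hε : 0 < ε) (hγ0 : 0 < γ) (hγ1 : γ ≤ 1) (hc2 : 2 ≤ c)
    (T : ℕ) (hT : 1 ≤ T) (hTε : T * ε^2 ≤ 4 * (1 / (6 * c))^2) (hNε : 4 ≤ T * ε)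
    (hΔ : 24 * ε ≤ Δ) (hu : 18 * c * ε ≤ u)
    (alg : (t : ℕ) → Kernel (Fin t → P × ℝ) P) [∀ t, IsMarkovKernel (alg t)]
    (g : P → ℝ) (hg : Measurable g) (hg1 : ∀ x, g x ∈ Set.Icc (0:ℝ) 1)
    (hsel : ∀ p : ProbabilityMeasure P, ∃ f ∈ F ∪ {g},
        ∫ x, (f x - g x)^2 ∂(p : Measure P) ≤ ε^2 ∧
        Δ - ε / 8 < ∫ x, (γ * (⨆ y, f y) - f x) ∂(p : Measure P))
    (z : P × ℝ) (hz : (⨆ x, g x) - g z.1 ≤ ε / 8)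
    (hL : ∀ f ∈ F, L ≤ ⨆ x, f x)
    (hfail : ∀ f ∈ F, ∀ hf : Measurable f, (chain (step f hf alg) T).real
      {ω | ∑ i, f (ω i).1 ≤ T * (γ * (⨆ x, f x) - Δ + u)} ≤ 1 / (3 * c)) :
    (chain (step g hg alg) T).real
      {ω | ∑ i, g (ω i).1 ≤ T * (γ * max (⨆ x, g x) L - Δ + 11 * ε)} ≤ 7 / (12 * c) := by
  set b := ⨆ x, g x with hb
  have hb01 : b ∈ Set.Icc (0:ℝ) 1 := sup_mem hg1
  have hN : (0:ℝ) < T := by exact_mod_cast hT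
  set N := (T:ℝ) with hNdef
  have hgb : ∀ x, g x ≤ b := le_sup_of hg1
  obtain ⟨θ, hθ⟩ : ∃ θ, θ = N * (Δ + (1 - γ) * b - 2 * (ε / 8)) - 1 := ⟨_, rfl⟩
  have hθ0 : 0 < θ := by
    have h2 : N * (24 * ε) ≤ N * Δ := by gcongr
    have h3 : 0 ≤ N * ((1 - γ) * b) := by
      have := hb01.1
      have : 0 ≤ 1 - γ := by linarith
      positivity
    rw [hθ]; nlinarith
  obtain ⟨f, hfF, h1, h2, h3, h4⟩ := pass_select F hF γ Δ ε (ε / 8) hε (by positivity)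
    (1 / (6 * c)) (by positivity) T hT hTε alg g hg hg1 hsel z hz θ hθ0.le (by
      rw [← hb, hθ]; apply le_of_eq; ring)
  rw [← hb] at h1 h2 h3 h4
  obtain ⟨hf, hf1⟩ := hF f hfF
  have hfA : ∀ x, f x ≤ ⨆ x, f x := le_sup_of hf1
  have hLA := hL f hfF
  have hfl := hfail f hfF hf
  have h4 := h4 hf
  set A := ⨆ x, f x with hA
  set ν := chain (fk (step g hg alg) (Bset g b θ) (Bset_meas g hg _ θ) z) T with hν
  have hdm : Measurable fun x => |f x - g x| := (hf.sub hg).abs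
  have hd1 : ∀ x, |f x - g x| ≤ 1 := by
    intro x
    rw [abs_le]
    constructor <;> linarith [(hf1 x).1, (hf1 x).2, (hg1 x).1, (hg1 x).2]
  -- the two models are close with high probability
  set S := {h : Fin T → P × ℝ | 12 * c * ε * N ≤ ∑ i, |f (h i).1 - g (h i).1|} with hS
  have hSm : MeasurableSet S := measurableSet_le measurable_const (meas_sum hdm T)
  have hSν : ν.real S ≤ 1 / (12 * c) := by
    have hi := integrable_sum' hdm (fun x => by simpa using hd1 x) T ν
    have h5 := mul_meas_ge_le_integral_of_nonneg (μ := ν)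
      (f := fun h : Fin T → P × ℝ => ∑ i, |f (h i).1 - g (h i).1|)
      (Filter.Eventually.of_forall fun h => Finset.sum_nonneg fun i _ => abs_nonneg _) hi
      (12 * c * ε * N)
    have h6 : (12 * c * ε * N) * ν.real S ≤ N * ε := h5.trans h2
    rw [le_div_iff₀ (by positivity)]
    have h7 : 0 < N * ε := by positivity
    have : (N * ε) * (ν.real S * (12 * c)) ≤ (N * ε) * 1 := by nlinarith
    exact le_of_mul_le_mul_left this h7
  set fl := {ω : Fin T → P × ℝ | ∑ i, f (ω i).1 ≤ N * (γ * A - Δ + u)} with hfldef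
  have hflm : MeasurableSet fl := measurableSet_le (meas_sum hf T) measurable_const
  set H := Sᶜ ∩ ((Bset g b θ T)ᶜ ∪ fl) with hHdef
  have hHm : MeasurableSet H := hSm.compl.inter ((Bset_meas g hg b θ T).compl.union hflm)
  have hdown := Bset_down g b θ hgb
  have hsub : freeze (Bset g b θ) z T ⁻¹' H ⊆ fl := by
    intro ω hω
    by_cases hal : freeze (Bset g b θ) z T ω ∈ Bset g b θ T
    · have e := freeze_eq _ z hdown T ω hal
      rcases hω.2 with h | h
      · exact absurd hal h
      · rwa [e] at h
    · obtain ⟨k, hk, hk1, hk2⟩ := dead_prefix g b θ hgb z hθ0 T ω hal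
      have hSω : ∑ i, |f ((freeze (Bset g b θ) z T ω) i).1 - g ((freeze (Bset g b θ) z T ω) i).1|
          < 12 * c * ε * N := not_le.1 hω.1
      set D := ∑ i : Fin T, (if i.val < k then b - g (ω i).1 else 0) with hD
      set κ := ∑ i : Fin T, (if i.val < k then (1:ℝ) else 0) with hκ
      have hκN : κ ≤ N := by
        calc κ ≤ ∑ i : Fin T, (1:ℝ) := Finset.sum_le_sum fun i _ => by split_ifs <;> norm_num
          _ = N := by simp [hNdef]
      have hDκ : D ≤ κ * b := by
        rw [hD, hκ, Finset.sum_mul]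
        refine Finset.sum_le_sum fun i _ => ?_
        split_ifs
        · linarith [(hg1 (ω i).1).1]
        · simp
      have hsum : ∑ i, f (ω i).1 ≤ κ * b - D + ∑ i, |f ((freeze (Bset g b θ) z T ω) i).1 -
          g ((freeze (Bset g b θ) z T ω) i).1| + (N - κ) * A := by
        have e : (N - κ) * A = ∑ i : Fin T, (1 - (if i.val < k then (1:ℝ) else 0)) * A := by
          rw [← Finset.sum_mul, Finset.sum_sub_distrib]; simp [hNdef, hκ]
        rw [e, hD, hκ, Finset.sum_mul, ← Finset.sum_sub_distrib, ← Finset.sum_add_distrib,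
          ← Finset.sum_add_distrib]
        refine Finset.sum_le_sum fun i _ => ?_
        by_cases hik : i.val < k
        · rw [hk1 i hik]
          simp only [if_pos hik]
          linarith [le_abs_self (f (ω i).1 - g (ω i).1)]
        · simp only [if_neg hik]
          linarith [abs_nonneg (f ((freeze (Bset g b θ) z T ω) i).1 -
            g ((freeze (Bset g b θ) z T ω) i).1), hfA (ω i).1]
      have := dead_bound (P := P) γ Δ ε u N c b A θ κ D hN hε hNε hc2 hγ0 hγ1 hΔ hu hb01.1 hθ
        hκN hk2 hDκ h3
      change ∑ i, f (ω i).1 ≤ N * (γ * A - Δ + u)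
      linarith
  have hH : ν.real H ≤ 1 / (3 * c) + 1 / (6 * c) := by
    refine (h4 H hHm).trans ?_
    rw [hb, frozen_real f hf alg g hg hg1 θ z T H hHm]
    gcongr
    exact (measureReal_mono hsub).trans hfl
  have hW : {ω : Fin T → P × ℝ | ∑ i, g (ω i).1 ≤ N * (γ * max b L - Δ + 11 * ε)} ⊆
      freeze (Bset g b θ) z T ⁻¹' (S ∪ H) := by
    intro ω hω
    by_contra hcon
    have hnS : freeze (Bset g b θ) z T ω ∉ S := fun h => hcon (Or.inl h)
    have hnH : freeze (Bset g b θ) z T ω ∉ H := fun h => hcon (Or.inr h)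
    have hal : freeze (Bset g b θ) z T ω ∈ Bset g b θ T := by
      by_contra h; exact hnH ⟨hnS, Or.inl h⟩
    have hnf : freeze (Bset g b θ) z T ω ∉ fl := fun h => hnH ⟨hnS, Or.inr h⟩
    rw [freeze_eq _ z hdown T ω hal] at hnS hnf
    have h5 : ∑ i, |f (ω i).1 - g (ω i).1| < 12 * c * ε * N := not_le.1 hnS
    have h6 : N * (γ * A - Δ + u) < ∑ i, f (ω i).1 := not_le.1 hnf
    have h7 : ∑ i, f (ω i).1 ≤ ∑ i, g (ω i).1 + ∑ i, |f (ω i).1 - g (ω i).1| := by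
      rw [← Finset.sum_add_distrib]
      exact Finset.sum_le_sum fun i _ => by linarith [le_abs_self (f (ω i).1 - g (ω i).1)]
    have h8 : ∑ i, g (ω i).1 ≤ N * (γ * max b L - Δ + 11 * ε) := hω
    have h9 : γ * max b L ≤ γ * A + ε := by
      rcases max_choice b L with h | h <;> rw [h]
      · linarith
      · have : γ * L ≤ γ * A := by gcongr
        linarith
    have h10 : N * (γ * max b L - Δ + 11 * ε) ≤ N * (γ * A - Δ + u) - 12 * c * ε * N := by
      have : N * (γ * max b L - Δ + 11 * ε) ≤ N * (γ * A - Δ + u - 12 * c * ε) := by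
        gcongr
        nlinarith
      linarith
    linarith
  refine (measureReal_mono hW).trans ?_
  rw [hb, ← frozen_real g hg alg g hg hg1 θ z T _ (hSm.union hHm)]
  refine (measureReal_union_le _ _).trans ((add_le_add hSν hH).trans (le_of_eq ?_))
  field_simp
  norm_num

/-! ### Second pass -/

lemma final_arith (γ Δ ε c ρ u m b A q v : ℝ) (hε : 0 < ε) (hγ0 : 0 < γ) (hγ1 : γ ≤ 1)
    (hc2 : 2 ≤ c) (hm : m = min ρ (Δ + 1 - γ)) (hmε : 6 * c^2 * ε ≤ m) (hu : u = 3 * m / c)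
    (hu2 : 18 * c * ε ≤ u) (hb1 : b ≤ 1) (hA1 : A ≤ 1) (hLA : 1 - ρ ≤ A)
    (hv : v = γ * max b (1 - ρ) - Δ) (hq0 : 0 ≤ q) (hq : q ≤ 13 / (12 * c))
    (h1 : (1 - q) * (γ * A - Δ + u) + q * v - ε < γ * A - Δ + ε / 8)
    (h2 : (1 - q) * (γ * A - Δ + u - b) ≤ ε) : False := by
  have hc0 : 0 < c := by linarith
  have hqc : q * c ≤ 13 / 12 := by
    rw [le_div_iff₀ (by positivity)] at hq
    linarith
  have hq2 : q ≤ 13 / 24 := by nlinarith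
  have hu36 : 36 * ε ≤ u := by nlinarith
  have hbA : γ * A - Δ ≤ b := by
    by_contra hcon
    push Not at hcon
    nlinarith
  have hmax : γ * A - γ * max b (1 - ρ) ≤ m := by
    rw [hm]
    refine le_min ?_ ?_
    · have h3 : γ * (1 - ρ) ≤ γ * max b (1 - ρ) := by
        gcongr; exact le_max_right _ _
      nlinarith
    · have h3 : γ * b ≤ γ * max b (1 - ρ) := by
        gcongr; exact le_max_left _ _
      nlinarith
  have hm0 : 0 < m := lt_of_lt_of_le (by positivity) hmε
  have h3 : (1 - q) * u < q * m + 9 / 8 * ε := by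
    have : q * (γ * A - γ * max b (1 - ρ)) ≤ q * m := by gcongr
    rw [hv] at h1
    nlinarith
  have h4 : u * c = 3 * m := by rw [hu]; field_simp
  have h5 : (1 - q) * (3 * m) < (q * c) * m + 9 / 8 * (c * ε) := by
    have := mul_lt_mul_of_pos_right h3 hc0
    rw [← h4]; nlinarith
  have h6 : (q * c) * m ≤ 13 / 12 * m := by gcongr
  have h7 : 12 * (c * ε) ≤ m := by nlinarith [mul_pos hc0 hε]
  have h8 : (11 / 24) * (3 * m) ≤ (1 - q) * (3 * m) := by
    gcongr; linarith
  linarith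

lemma pass_two {P : Type*} [MeasurableSpace P] (F : Set (P → ℝ))
    (hF : ∀ f ∈ F, Measurable f ∧ ∀ x, f x ∈ Set.Icc (0:ℝ) 1)
    (γ Δ ε c u ρ m : ℝ) (hε : 0 < ε) (hγ0 : 0 < γ) (hγ1 : γ ≤ 1) (hc2 : 2 ≤ c)
    (T : ℕ) (hT : 1 ≤ T) (hTε : T * ε^2 ≤ 4 * (1 / (6 * c))^2) (hNε : 4 ≤ T * ε)
    (hu2 : 18 * c * ε ≤ u) (hm : m = min ρ (Δ + 1 - γ)) (hmε : 6 * c^2 * ε ≤ m)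
    (hu : u = 3 * m / c)
    (alg : (t : ℕ) → Kernel (Fin t → P × ℝ) P) [∀ t, IsMarkovKernel (alg t)]
    (g : P → ℝ) (hg : Measurable g) (hg1 : ∀ x, g x ∈ Set.Icc (0:ℝ) 1)
    (hsel : ∀ p : ProbabilityMeasure P, ∃ f ∈ F ∪ {g},
        ∫ x, (f x - g x)^2 ∂(p : Measure P) ≤ ε^2 ∧
        Δ - ε / 8 < ∫ x, (γ * (⨆ y, f y) - f x) ∂(p : Measure P))
    (z : P × ℝ) (hz : (⨆ x, g x) - g z.1 ≤ ε / 8)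
    (hL : ∀ f ∈ F, 1 - ρ ≤ ⨆ x, f x)
    (hfail : ∀ f ∈ F, ∀ hf : Measurable f, (chain (step f hf alg) T).real
      {ω | ∑ i, f (ω i).1 ≤ T * (γ * (⨆ x, f x) - Δ + u)} ≤ 1 / (3 * c))
    (hW : (chain (step g hg alg) T).real
      {ω | ∑ i, g (ω i).1 ≤ T * (γ * max (⨆ x, g x) (1 - ρ) - Δ + 11 * ε)} ≤ 7 / (12 * c)) :
    False := by
  set b := ⨆ x, g x with hb
  have hb01 : b ∈ Set.Icc (0:ℝ) 1 := sup_mem hg1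
  have hN : (0:ℝ) < T := by exact_mod_cast hT
  set N := (T:ℝ) with hNdef
  have hgb : ∀ x, g x ≤ b := le_sup_of hg1
  obtain ⟨v, hv⟩ : ∃ v, v = γ * max b (1 - ρ) - Δ := ⟨_, rfl⟩
  rw [← hv] at hW
  have hsg : ∀ ω : Fin T → P × ℝ, ∑ i, g (ω i).1 ≤ N * b := by
    intro ω
    calc ∑ i, g (ω i).1 ≤ ∑ i : Fin T, b := Finset.sum_le_sum fun i _ => hgb _
      _ = N * b := by simp [hNdef]
  have hvb : v + 11 * ε < b := by
    by_contra hcon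
    push Not at hcon
    have : {ω : Fin T → P × ℝ | ∑ i, g (ω i).1 ≤ N * (v + 11 * ε)} = Set.univ := by
      refine Set.eq_univ_of_forall fun ω => (hsg ω).trans ?_
      gcongr
    rw [this, probReal_univ, le_div_iff₀ (by positivity)] at hW
    linarith
  have hvγ : γ * b - Δ ≤ v := by
    have : γ * b ≤ γ * max b (1 - ρ) := by
      gcongr; exact le_max_left _ _
    linarith
  obtain ⟨θ, hθ⟩ : ∃ θ, θ = N * (b - v - 2 * (ε / 8)) - 1 := ⟨_, rfl⟩
  have hθ0 : 0 < θ := by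
    have : N * (10 * ε) ≤ N * (b - v - 2 * (ε / 8)) := by gcongr; linarith
    linarith
  have hθ2 : N * (γ * b - b) + θ + 1 + N * (ε / 8) ≤ N * (Δ - ε / 8) := by
    have : N * (γ * b - Δ) ≤ N * v := by gcongr
    rw [hθ]; linarith
  obtain ⟨f, hfF, h1, h2, h3, h4⟩ := pass_select F hF γ Δ ε (ε / 8) hε (by positivity)
    (1 / (6 * c)) (by positivity) T hT hTε alg g hg hg1 hsel z hz θ hθ0.le hθ2
  rw [← hb] at h1 h2 h3 h4
  obtain ⟨hf, hf1⟩ := hF f hfF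
  have hfA : ∀ x, f x ≤ ⨆ x, f x := le_sup_of hf1
  have hA1 : (⨆ x, f x) ≤ 1 := (sup_mem hf1).2
  have hLA := hL f hfF
  have hfl := hfail f hfF hf
  have h4 := h4 hf
  set A := ⨆ x, f x with hA
  set ν := chain (fk (step g hg alg) (Bset g b θ) (Bset_meas g hg _ θ) z) T with hν
  have hdm : Measurable fun x => |f x - g x| := (hf.sub hg).abs
  have hd1 : ∀ x, |f x - g x| ≤ 1 := by
    intro x
    rw [abs_le]
    constructor <;> linarith [(hf1 x).1, (hf1 x).2, (hg1 x).1, (hg1 x).2]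
  have hdown := Bset_down g b θ hgb
  have hBm := Bset_meas g hg b θ T
  have hfm := freeze_measurable (Bset g b θ) (Bset_meas g hg _ θ) z T
  set fl := {ω : Fin T → P × ℝ | ∑ i, f (ω i).1 ≤ N * (γ * A - Δ + u)} with hfldef
  have hflm : MeasurableSet fl := measurableSet_le (meas_sum hf T) measurable_const
  have hdead : ν.real (Bset g b θ T)ᶜ ≤ 7 / (12 * c) := by
    rw [hν, hb, frozen_real g hg alg g hg hg1 θ z T _ hBm.compl]
    refine (measureReal_mono ?_).trans hW
    intro ω hω
    have hω' : ω ∉ Bset g b θ T := by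
      intro h
      refine hω ?_
      change freeze (Bset g b θ) z T ω ∈ Bset g b θ T
      rwa [freeze_eq' _ z hdown T ω h]
    have h5 : θ ≤ ∑ i, (b - g (ω i).1) := not_lt.1 hω'
    rw [Finset.sum_sub_distrib] at h5
    simp only [Finset.sum_const, Finset.card_univ, Fintype.card_fin, nsmul_eq_mul] at h5
    change ∑ i, g (ω i).1 ≤ N * (v + 11 * ε)
    rw [hθ] at h5
    nlinarith
  have hH : ν.real (Bset g b θ T ∩ fl) ≤ 1 / (3 * c) + 1 / (6 * c) := by
    refine (h4 _ (hBm.inter hflm)).trans ?_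
    rw [hb, frozen_real f hf alg g hg hg1 θ z T _ (hBm.inter hflm)]
    gcongr
    refine (measureReal_mono ?_).trans hfl
    intro ω hω
    have e := freeze_eq _ z hdown T ω hω.1
    have := hω.2
    rwa [← hb, e] at this
  set E := Bset g b θ T ∩ flᶜ with hE
  have hEm : MeasurableSet E := hBm.inter hflm.compl
  set q := ν.real Eᶜ with hqdef
  have hq : q ≤ 13 / (12 * c) := by
    have hsub : Eᶜ ⊆ (Bset g b θ T)ᶜ ∪ (Bset g b θ T ∩ fl) := by
      intro ω hω
      by_cases h : ω ∈ Bset g b θ T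
      · right
        refine ⟨h, ?_⟩
        by_contra h'
        exact hω ⟨h, h'⟩
      · left; exact h
    refine (measureReal_mono hsub).trans ((measureReal_union_le _ _).trans
      ((add_le_add hdead hH).trans (le_of_eq ?_)))
    field_simp
    norm_num
  have hEq : ν.real E = 1 - q := by
    rw [hqdef, probReal_compl_eq_one_sub hEm]; ring
  have hfi := integrable_sum' hf (abs_le_one_of hf1) T ν
  have hdi := integrable_sum' hdm (fun x => by simpa using hd1 x) T ν
  have hae : ∀ᵐ h ∂ν, N * v ≤ ∑ i, g (h i).1 := by
    rw [hν, ← map_freeze _ _ (Bset_meas g hg _ θ) z hdown T, ae_map_iff hfm.aemeasurable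
      (measurableSet_le measurable_const (meas_sum hg T))]
    refine Filter.Eventually.of_forall fun ω => ?_
    have := deficit_le g b θ (ε / 8) (fun x => by linarith [(hg1 x).1, hb01.2]) z hz
      (by positivity) hθ0.le T ω
    rw [Finset.sum_sub_distrib] at this
    simp only [Finset.sum_const, Finset.card_univ, Fintype.card_fin, nsmul_eq_mul] at this
    nlinarith
  have hcomp : ∀ h : Fin T → P × ℝ, |∑ i, f (h i).1 - ∑ i, g (h i).1| ≤
      ∑ i, |f (h i).1 - g (h i).1| := by
    intro h
    rw [← Finset.sum_sub_distrib]
    exact Finset.abs_sum_le_sum_abs _ _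
  have hind : ∀ (S : Set (Fin T → P × ℝ)), MeasurableSet S → ∀ a : ℝ,
      Integrable (S.indicator fun _ => a) ν ∧ ∫ h, S.indicator (fun _ => a) h ∂ν = ν.real S * a := by
    intro S hS a
    refine ⟨(integrable_const a).indicator hS, ?_⟩
    rw [integral_indicator_const _ hS, smul_eq_mul]
  obtain ⟨i1, e1⟩ := hind E hEm (N * (γ * A - Δ + u))
  obtain ⟨i2, e2⟩ := hind Eᶜ hEm.compl (N * v)
  obtain ⟨i3, e3⟩ := hind E hEm (N * (γ * A - Δ + u - b))
  have hlow : (1 - q) * (N * (γ * A - Δ + u)) + q * (N * v) - N * ε ≤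
      ∫ h, (∑ i, f (h i).1) ∂ν := by
    have h5 : ∫ h, (E.indicator (fun _ => N * (γ * A - Δ + u)) h +
        Eᶜ.indicator (fun _ => N * v) h - ∑ i, |f (h i).1 - g (h i).1|) ∂ν ≤
        ∫ h, (∑ i, f (h i).1) ∂ν := by
      refine integral_mono_ae ((i1.add i2).sub hdi) hfi ?_
      filter_upwards [hae] with h hh
      have h6 := hcomp h
      rw [abs_le] at h6
      have h7 : 0 ≤ ∑ i, |f (h i).1 - g (h i).1| := Finset.sum_nonneg fun i _ => abs_nonneg _
      by_cases hhE : h ∈ E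
      · have h8 : N * (γ * A - Δ + u) < ∑ i, f (h i).1 := not_le.1 hhE.2
        rw [Set.indicator_of_mem hhE, Set.indicator_of_notMem (by simpa using hhE)]
        linarith
      · rw [Set.indicator_of_notMem hhE, Set.indicator_of_mem (by simpa using hhE)]
        linarith
    rw [integral_sub (f := fun h => E.indicator (fun _ => N * (γ * A - Δ + u)) h +
        Eᶜ.indicator (fun _ => N * v) h) (i1.add i2) hdi, integral_add i1 i2, e1, e2, hEq] at h5
    linarith
  have hup : (1 - q) * (N * (γ * A - Δ + u - b)) ≤ N * ε := by
    rw [← hEq, ← e3]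
    refine le_trans (integral_mono i3 hdi fun h => ?_) h2
    have h6 := hcomp h
    rw [abs_le] at h6
    have h7 : 0 ≤ ∑ i, |f (h i).1 - g (h i).1| := Finset.sum_nonneg fun i _ => abs_nonneg _
    by_cases hhE : h ∈ E
    · have h8 : N * (γ * A - Δ + u) < ∑ i, f (h i).1 := not_le.1 hhE.2
      rw [Set.indicator_of_mem hhE]
      have := hsg h
      linarith
    · rw [Set.indicator_of_notMem hhE]
      exact h7
  refine final_arith γ Δ ε c ρ u m b A q v hε hγ0 hγ1 hc2 hm hmε hu hu2 hb01.2 hA1 hLA hv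
    measureReal_nonneg hq ?_ ?_
  · have : N * ((1 - q) * (γ * A - Δ + u) + q * v - ε) < N * (γ * A - Δ + ε / 8) := by
      linarith
    exact lt_of_mul_lt_mul_left this hN.le
  · have : N * ((1 - q) * (γ * A - Δ + u - b)) ≤ N * ε := by linarith
    exact le_of_mul_le_mul_left this hN

/-- **Theorem 1 (main lower bound).** For any algorithm there is a model `f` in the
class under which, with probability at least `1/(3C)`, the average γ-regret over `T`
rounds is at least `Δ − 3 min(ρ, Δ+1−γ)/C`, where `Δ = dec^γ_ε(F)`. -/
theorem main_gamma_regret_lower_bound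
    {P : Type*} [MeasurableSpace P] (F : Set (P → ℝ))
    (hF : ∀ f ∈ F, Measurable f ∧ ∀ x, f x ∈ Set.Icc (0:ℝ) 1)
    (hFmax : ∀ f ∈ F, ∃ x, ∀ y, f y ≤ f x)
    (hsup : (⨆ f : F, ⨆ x, (f : P → ℝ) x) = 1)
    (γ : ℝ) (hγ : γ ∈ Set.Ioc (0:ℝ) 1)
    (C : ℕ) (hC : 2 ≤ C)
    (T : ℕ) (hT : 1 ≤ T)
    (ε : ℝ) (hε1 : 4 / (T:ℝ) ≤ ε) (hε2 : ε ≤ 1 / (3 * C * Real.sqrt T))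
    (ρ : ℝ)
    (hloc : ∀ f ∈ F, ∀ g ∈ F, (⨆ x, f x) - (⨆ x, g x) ≤ ρ)
    (hρ : 6 * (C:ℝ)^2 * ε ≤ ρ)
    (hΔ : 6 * (C:ℝ)^2 * ε ≤ dec γ ε F)
    (alg : (t : ℕ) → Kernel (Fin t → P × ℝ) P)
    (halg : ∀ t, IsMarkovKernel (alg t)) :
    ∃ f ∈ F,
      trajMeasure f alg T
        {ω | dec γ ε F - 3 * min ρ (dec γ ε F + 1 - γ) / C ≤
              (1 / (T:ℝ)) * ∑ t : Fin T, (γ * (⨆ x, f x) - f (ω t).1)} ≥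
        1 / (3 * (C : ℝ≥0∞)) := by
  haveI : ∀ t, IsMarkovKernel (alg t) := halg
  by_contra hcon
  push Not at hcon
  have hN : (0:ℝ) < T := by exact_mod_cast hT
  have hc2 : (2:ℝ) ≤ C := by exact_mod_cast hC
  have hc0 : (0:ℝ) < C := by linarith
  have hε : 0 < ε := lt_of_lt_of_le (by positivity) hε1
  have hNε : 4 ≤ (T:ℝ) * ε := by
    rw [div_le_iff₀ hN] at hε1; linarith
  have hTε : (T:ℝ) * ε^2 ≤ 4 * (1 / (6 * (C:ℝ)))^2 := by
    have h1 : ε^2 ≤ (1 / (3 * C * Real.sqrt T))^2 := by gcongr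
    have h2 : (1 / (3 * C * Real.sqrt T))^2 = 1 / (9 * (C:ℝ)^2 * T) := by
      rw [div_pow, mul_pow, mul_pow, Real.sq_sqrt hN.le]; norm_num
    rw [h2] at h1
    calc (T:ℝ) * ε^2 ≤ T * (1 / (9 * (C:ℝ)^2 * T)) := by gcongr
      _ = 4 * (1 / (6 * (C:ℝ)))^2 := by field_simp; norm_num
  obtain ⟨Δ, hΔdef⟩ : ∃ Δ, Δ = dec γ ε F := ⟨_, rfl⟩
  obtain ⟨m, hm⟩ : ∃ m, m = min ρ (Δ + 1 - γ) := ⟨_, rfl⟩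
  obtain ⟨u, hu⟩ : ∃ u, u = 3 * m / (C:ℝ) := ⟨_, rfl⟩
  simp only [← hΔdef, ← hm, ← hu] at hΔ hcon
  have hmε : 6 * (C:ℝ)^2 * ε ≤ m := by
    rw [hm]; exact le_min hρ (by linarith [hγ.2])
  have hu2 : 18 * (C:ℝ) * ε ≤ u := by
    rw [hu, le_div_iff₀ hc0]; linarith
  have hΔ24 : 24 * ε ≤ Δ := by
    have : (24:ℝ) * ε ≤ 6 * (C:ℝ)^2 * ε := by
      gcongr; nlinarith
    linarith
  -- nonemptiness
  have hFne : Nonempty F := by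
    by_contra h
    rw [not_nonempty_iff] at h
    rw [Real.iSup_of_isEmpty] at hsup
    norm_num at hsup
  have hPne : Nonempty P := by
    obtain ⟨f, hf⟩ := hFne
    obtain ⟨x, -⟩ := hFmax f hf
    exact ⟨x⟩
  have hL : ∀ f ∈ F, 1 - ρ ≤ ⨆ x, f x := by
    intro f hf
    have : (⨆ f : F, ⨆ x, (f : P → ℝ) x) ≤ ρ + ⨆ x, f x :=
      ciSup_le fun f' => by linarith [hloc f'.1 f'.2 f hf]
    linarith
  have hfail : ∀ f ∈ F, ∀ hf : Measurable f, (chain (step f hf alg) T).real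
      {ω | ∑ i, f (ω i).1 ≤ T * (γ * (⨆ x, f x) - Δ + u)} ≤ 1 / (3 * (C:ℝ)) := by
    intro f hfF hf
    have h1 := hcon f hfF
    rw [traj_eq_chain f hf alg T] at h1
    have e : {ω : Fin T → P × ℝ | Δ - u ≤ (1 / (T:ℝ)) * ∑ t : Fin T,
        (γ * (⨆ x, f x) - f (ω t).1)} =
        {ω | ∑ i, f (ω i).1 ≤ T * (γ * (⨆ x, f x) - Δ + u)} := by
      ext ω
      rw [Set.mem_ofPred_eq, Set.mem_ofPred_eq]
      rw [one_div, le_inv_mul_iff₀ hN, Finset.sum_sub_distrib]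
      simp only [Finset.sum_const, Finset.card_univ, Fintype.card_fin, nsmul_eq_mul]
      constructor <;> intro h <;> linarith
    rw [e] at h1
    rw [measureReal_def]
    have e2 : (1 / (3 * (C:ℝ≥0∞))).toReal = 1 / (3 * (C:ℝ)) := by simp
    rw [← e2]
    refine ENNReal.toReal_mono ?_ h1.le
    have : (C:ℝ≥0∞) ≠ 0 := by
      simp only [ne_eq, Nat.cast_eq_zero]; omega
    simp [this]
  obtain ⟨g, hg, hg1, hsel⟩ := dec_select F hF γ hγ ε (ε / 8) (by positivity)
  rw [← hΔdef] at hsel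
  obtain ⟨x, hx⟩ := exists_lt_of_lt_ciSup (show (⨆ x, g x) - ε / 8 < ⨆ x, g x by linarith)
  have hz : (⨆ x, g x) - g ((x, (0:ℝ)) : P × ℝ).1 ≤ ε / 8 := by
    change (⨆ x, g x) - g x ≤ ε / 8
    linarith
  have hW := pass_one F hF γ Δ ε C u (1 - ρ) hε hγ.1 hγ.2 hc2 T hT hTε hNε hΔ24 hu2 alg g hg hg1
    hsel (x, 0) hz hL hfail
  exact pass_two F hF γ Δ ε C u ρ m hε hγ.1 hγ.2 hc2 T hT hTε hNε hu2 hm hmε hu alg g hg hg1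
    hsel (x, 0) hz hL hfail hW

end
end

section
/- DEC lower bound for the Example (Proposition 2, first part). Assume 180·T ≤ exp(d/8), K ≤ 20T, and K ≥ 6000/γ², and let ε := 1/(3√T). Then for every probability distribution p on Π there exists a model (w,k) in M̃ such that E_{(π',π)∼p}[(f_{w,k}(π',π) − f̂(π',π))²] ≤ ε² and E_{(π',π)∼p}[γ·1 − f_{w,k}(π',π)] ≥ (γ/2)·√(K/(20T)). Consequently, dec^γ_ε(M̃ ∪ {M̂}, M̂) ≥ (γ/2)·√(K/(20T)), where M̂ is the Gaussian bandit model with mean function f̂ and every model in M̃ has maximum mean reward 1. -/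
open MeasureTheory ProbabilityTheory
open scoped ENNReal NNReal

noncomputable section

def sgn (b : Bool) : ℝ := if b then 1 else -1

/-- Inner product of two sign vectors in `{−1,1}^d`, encoded by `Fin d → Bool`. -/
def ip {d : ℕ} (w x : Fin d → Bool) : ℝ := ∑ i, sgn (w i) * sgn (x i)

/-- The action set `({−1,1}^d ∪ {⊥}) × [K]`; `none` plays the role of `⊥`. -/
abbrev ExAct (d K : ℕ) := Option (Fin d → Bool) × Fin K

instance (d K : ℕ) : MeasurableSpace (ExAct d K) := ⊤

/-- `h_w(π') = (2/d)·max(0, ⟨π',w⟩ − d/2)` with `h_w(⊥) = 0`. -/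
def hfun {d : ℕ} (w : Fin d → Bool) : Option (Fin d → Bool) → ℝ
  | none => 0
  | some x => (2 / (d:ℝ)) * max 0 (ip x w - d/2)

/-- Mean reward of the model `(w,k)` of the subclass `M̃`: `v_k = 1` and
`v_j = 1 − √(K/(20T))` for `j ≠ k`. -/
def fEx (d K T : ℕ) (γ : ℝ) (w : Fin d → Bool) (k : Fin K) : ExAct d K → ℝ :=
  fun a => (1 - γ) * hfun w a.1 +
    γ * (if a.2 = k then 1 else 1 - Real.sqrt ((K:ℝ) / (20 * (T:ℝ))))

/-- The constant reference mean `f̂ = γ(1 − √(K/(20T)))`. -/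
def fhat (d K T : ℕ) (γ : ℝ) : ExAct d K → ℝ :=
  fun _ => γ * (1 - Real.sqrt ((K:ℝ) / (20 * (T:ℝ))))

lemma sgn_mul_le (a b : Bool) : sgn a * sgn b ≤ 1 := by
  cases a <;> cases b <;> norm_num [sgn]

lemma ip_le {d : ℕ} (x w : Fin d → Bool) : ip x w ≤ d := by
  unfold ip
  calc _ ≤ ∑ _i : Fin d, (1:ℝ) := Finset.sum_le_sum (fun i _ => sgn_mul_le _ _)
    _ = d := by simp

lemma ip_self {d : ℕ} (w : Fin d → Bool) : ip w w = d := by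
  unfold ip
  have : ∀ b, sgn b * sgn b = 1 := by intro b; cases b <;> norm_num [sgn]
  simp [this]

lemma hfun_nonneg {d : ℕ} (w : Fin d → Bool) (o) : 0 ≤ hfun w o := by
  cases o with
  | none => simp [hfun]
  | some x => simp only [hfun]; positivity

lemma hfun_le_one {d : ℕ} (w : Fin d → Bool) (o) : hfun w o ≤ 1 := by
  cases o with
  | none => simp [hfun]
  | some x =>
    simp only [hfun]
    have h1 := ip_le x w
    rcases Nat.eq_zero_or_pos d with h | h
    · subst h; simp
    · have hd : (0:ℝ) < d := by exact_mod_cast h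
      have : max 0 (ip x w - d/2) ≤ (d:ℝ)/2 := max_le (by positivity) (by linarith)
      calc _ ≤ (2/(d:ℝ)) * (d/2) := by gcongr
        _ = 1 := by field_simp

lemma hfun_self {d : ℕ} (hd : 0 < d) (w : Fin d → Bool) : hfun w (some w) = 1 := by
  have hd : (0:ℝ) < d := by exact_mod_cast hd
  simp only [hfun, ip_self]
  rw [max_eq_right (by linarith)]
  field_simp
  ring

lemma hfun_le_exp {d : ℕ} (w x : Fin d → Bool) :
    hfun w (some x) ≤ Real.exp (ip x w / 2) * Real.exp (-(d:ℝ)/4) := by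
  rw [← Real.exp_add]
  by_cases h : ip x w ≤ d/2
  · simp only [hfun]
    rw [max_eq_left (by linarith), mul_zero]
    positivity
  · push Not at h
    exact (hfun_le_one w _).trans (Real.one_le_exp (by linarith))

lemma sum_exp {d : ℕ} (x : Fin d → Bool) :
    ∑ w : Fin d → Bool, Real.exp (ip x w / 2) ≤ 2^d * Real.exp ((d:ℝ)/8) := by
  have h1 : ∀ w : Fin d → Bool, Real.exp (ip x w / 2)
      = ∏ i, Real.exp (sgn (x i) * sgn (w i) / 2) := by
    intro w
    rw [← Real.exp_sum, ip, Finset.sum_div]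
  simp_rw [h1]
  rw [← Fintype.prod_sum (fun i (b : Bool) => Real.exp (sgn (x i) * sgn b / 2))]
  have h2 : ∀ i : Fin d, ∑ b : Bool, Real.exp (sgn (x i) * sgn b / 2) ≤ 2 * Real.exp (1/8) := by
    intro i
    have h := Real.cosh_le_exp_half_sq (1/2)
    rw [Real.cosh_eq] at h
    norm_num at h
    cases x i <;> norm_num [sgn] <;> norm_num at h ⊢ <;> linarith
  calc _ ≤ ∏ _i : Fin d, (2 * Real.exp (1/8)) :=
        Finset.prod_le_prod (fun i _ => by positivity) (fun i _ => h2 i)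
    _ = _ := by
      simp only [Finset.prod_const, Finset.card_univ, Fintype.card_fin, mul_pow]
      rw [← Real.exp_nat_mul]
      congr 2
      ring

lemma sum_hfun {d : ℕ} (o : Option (Fin d → Bool)) :
    ∑ w : Fin d → Bool, hfun w o ≤ 2^d * Real.exp (-((d:ℝ)/8)) := by
  cases o with
  | none => simp only [hfun, Finset.sum_const_zero]; positivity
  | some x =>
    calc _ ≤ ∑ w : Fin d → Bool, Real.exp (ip x w / 2) * Real.exp (-(d:ℝ)/4) :=
          Finset.sum_le_sum (fun w _ => hfun_le_exp w x)
      _ ≤ (2^d * Real.exp ((d:ℝ)/8)) * Real.exp (-(d:ℝ)/4) := by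
          rw [← Finset.sum_mul]; gcongr; exact sum_exp x
      _ = _ := by rw [mul_assoc, ← Real.exp_add]; congr 2; ring

instance instMSC (d K : ℕ) : MeasurableSingletonClass (ExAct d K) := ⟨fun _ => trivial⟩

lemma integ {d K : ℕ} (p : Measure (ExAct d K)) [IsProbabilityMeasure p] (f : ExAct d K → ℝ) :
    Integrable f p := Integrable.of_finite

lemma exists_w {d K : ℕ} (p : Measure (ExAct d K)) [IsProbabilityMeasure p] :
    ∃ w : Fin d → Bool, ∫ a, hfun w a.1 ∂p ≤ Real.exp (-((d:ℝ)/8)) := by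
  have h : ∑ w : Fin d → Bool, ∫ a, hfun w a.1 ∂p
      ≤ ∑ _w : Fin d → Bool, Real.exp (-((d:ℝ)/8)) := by
    rw [← integral_finsetSum _ (fun w _ => integ p _)]
    calc _ ≤ ∫ _a, (2^d * Real.exp (-((d:ℝ)/8))) ∂p :=
          integral_mono (integ p _) (integ p _) (fun a => sum_hfun a.1)
      _ = _ := by simp
  obtain ⟨w, _, hw⟩ := Finset.exists_le_of_sum_le Finset.univ_nonempty h
  exact ⟨w, hw⟩

lemma exists_k {d K : ℕ} (hK : 0 < K) (p : Measure (ExAct d K)) [IsProbabilityMeasure p] :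
    ∃ k : Fin K, ∫ a, (if a.2 = k then (1:ℝ) else 0) ∂p ≤ 1 / K := by
  have hK' : (0:ℝ) < K := by exact_mod_cast hK
  haveI : Nonempty (Fin K) := ⟨⟨0, hK⟩⟩
  have h : ∑ k : Fin K, ∫ a, (if a.2 = k then (1:ℝ) else 0) ∂p
      ≤ ∑ _k : Fin K, (1 / K : ℝ) := by
    rw [← integral_finsetSum _ (fun w _ => integ p _)]
    simp
    field_simp
    exact le_refl _
  obtain ⟨w, _, hw⟩ := Finset.exists_le_of_sum_le Finset.univ_nonempty h
  exact ⟨w, hw⟩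

lemma part_one (d K T : ℕ) (γ : ℝ) (hγ : γ ∈ Set.Ioc (0:ℝ) 1)
    (hdT : 180 * (T:ℝ) ≤ Real.exp ((d:ℝ) / 8))
    (hKT : (K:ℝ) ≤ 20 * (T:ℝ))
    (hKγ : 6000 / γ^2 ≤ (K:ℝ)) (p : Measure (ExAct d K)) (hp : IsProbabilityMeasure p) :
      ∃ (w : Fin d → Bool) (k : Fin K),
        (∫ a, (fEx d K T γ w k a - fhat d K T γ a)^2 ∂p ≤ (1 / (3 * Real.sqrt T))^2) ∧
        ((γ/2) * Real.sqrt ((K:ℝ) / (20 * T)) ≤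
          ∫ a, (γ * 1 - fEx d K T γ w k a) ∂p) := by
  obtain ⟨h0, h1⟩ := hγ
  have hKg : 6000 ≤ K * γ^2 := by rwa [div_le_iff₀ (by positivity)] at hKγ
  have hK6 : (6000:ℝ) ≤ K := by
    have : γ^2 ≤ 1 := by nlinarith
    have : (0:ℝ) ≤ K := by positivity
    nlinarith
  have hT : (0:ℝ) < T := by linarith
  have hK : 0 < K := by
    have : (0:ℝ) < K := by linarith
    exact_mod_cast this
  have hK' : (0:ℝ) < K := by linarith
  obtain ⟨w, hw⟩ := exists_w p
  obtain ⟨k, hk⟩ := exists_k hK p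
  have hexp : Real.exp (-((d:ℝ)/8)) ≤ 1 / (180 * T) := by
    rw [Real.exp_neg, ← one_div]
    exact one_div_le_one_div_of_le (by positivity) hdT
  have hw2 := hw.trans hexp
  set Δ := Real.sqrt ((K:ℝ) / (20 * T)) with hΔ
  have hΔ0 : 0 ≤ Δ := Real.sqrt_nonneg _
  have hΔsq : Δ^2 = K / (20 * T) := Real.sq_sqrt (by positivity)
  have hΔ1 : Δ ≤ 1 := by
    rw [hΔ, Real.sqrt_le_one, div_le_one (by positivity)]; exact hKT
  set H := ∫ a, hfun w a.1 ∂p with hH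
  set P := ∫ a, (if a.2 = k then (1:ℝ) else 0) ∂p with hP
  refine ⟨w, k, ?_, ?_⟩
  · have hpt : ∀ a, (fEx d K T γ w k a - fhat d K T γ a)^2
        ≤ 2 * hfun w a.1 + 2 * Δ^2 * (if a.2 = k then (1:ℝ) else 0) := by
      intro a
      have e0 := hfun_nonneg w a.1
      have e1 := hfun_le_one w a.1
      have key : ∀ h : ℝ, 0 ≤ h → h ≤ 1 → ((1-γ)*h)^2 ≤ h := by
        intro h a0 a1
        have : (1-γ)*h ≤ h := by nlinarith
        have h3 : 0 ≤ (1-γ)*h := mul_nonneg (by linarith) a0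
        nlinarith
      have k1 := key _ e0 e1
      have k2 : (γ * Δ)^2 ≤ Δ^2 := by
        have : γ * Δ ≤ Δ := by nlinarith
        gcongr
      simp only [fEx, fhat, ← hΔ]
      split_ifs
      · nlinarith [sq_nonneg ((1-γ)*hfun w a.1 - γ*Δ)]
      · nlinarith
    calc _ ≤ ∫ a, (2 * hfun w a.1 + 2 * Δ^2 * (if a.2 = k then (1:ℝ) else 0)) ∂p :=
          integral_mono (integ p _) (integ p _) hpt
      _ = 2 * H + 2 * Δ^2 * P := by
          rw [integral_add (integ p _) (integ p _), integral_const_mul, integral_const_mul]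
      _ ≤ 2 * (1 / (180 * T)) + 2 * Δ^2 * (1 / K) := by gcongr
      _ = _ := by
          rw [hΔsq, div_pow, mul_pow, Real.sq_sqrt hT.le]
          field_simp
          norm_num
  · have e : ∫ a, (γ * 1 - fEx d K T γ w k a) ∂p = γ * Δ - (1-γ) * H - γ * Δ * P := by
      have : ∀ a, γ * 1 - fEx d K T γ w k a
          = (γ * Δ - (1-γ) * hfun w a.1) - γ * Δ * (if a.2 = k then (1:ℝ) else 0) := by
        intro a
        simp only [fEx, ← hΔ]
        split_ifs <;> ring
      simp_rw [this]
      rw [integral_sub (integ p _) (integ p _), integral_sub (integ p _) (integ p _),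
        integral_const, integral_const_mul, integral_const_mul]
      simp [hH, hP]
    rw [e]
    have hH0 : 0 ≤ H := integral_nonneg (fun a => hfun_nonneg w a.1)
    have g0 : 0 ≤ γ * Δ := by positivity
    have g1 : γ * Δ ≤ 1 := by nlinarith
    have g2 : 300 / T ≤ (γ * Δ)^2 := by
      rw [mul_pow, hΔsq, div_le_iff₀ hT]
      field_simp
      linarith
    have g3 : 300 / T ≤ γ * Δ := by nlinarith
    have hP4 : P ≤ 1/4 := hk.trans (by rw [div_le_div_iff₀ hK' (by norm_num)]; linarith)
    have g4 : γ * Δ * P ≤ γ * Δ * (1/4) := by gcongr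
    have g5 : (1-γ) * H ≤ H := by nlinarith
    have g6 : (1:ℝ) / (180 * T) ≤ (1/4) * (300 / T) := by
      field_simp; norm_num
    linarith

/-- **Proposition 2, first part (DEC lower bound for Example 1).** For every
distribution `p` on the action set there is a model `(w,k) ∈ M̃` that satisfies the
squared-error constraint at level `ε = 1/(3√T)` and has instantaneous γ-regret at
least `(γ/2)√(K/(20T))`; consequently `dec^γ_ε(M̃ ∪ {M̂}, M̂) ≥ (γ/2)√(K/(20T))`. -/
theorem example_dec_lower_bound (d K T : ℕ) (γ : ℝ) (hγ : γ ∈ Set.Ioc (0:ℝ) 1)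
    (hdT : 180 * (T:ℝ) ≤ Real.exp ((d:ℝ) / 8))
    (hKT : (K:ℝ) ≤ 20 * (T:ℝ))
    (hKγ : 6000 / γ^2 ≤ (K:ℝ)) :
    (∀ p : Measure (ExAct d K), IsProbabilityMeasure p →
      ∃ (w : Fin d → Bool) (k : Fin K),
        (∫ a, (fEx d K T γ w k a - fhat d K T γ a)^2 ∂p ≤ (1 / (3 * Real.sqrt T))^2) ∧
        ((γ/2) * Real.sqrt ((K:ℝ) / (20 * T)) ≤
          ∫ a, (γ * 1 - fEx d K T γ w k a) ∂p)) ∧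
    (γ/2) * Real.sqrt ((K:ℝ) / (20 * T)) ≤
      decConstrained γ (1 / (3 * Real.sqrt T))
        ({f | ∃ w k, f = fEx d K T γ w k} ∪ {fhat d K T γ}) (fhat d K T γ) := by
  refine ⟨part_one d K T γ hγ hdT hKT hKγ, ?_⟩
  have hKg : 6000 ≤ K * γ^2 := by
    have := hγ.1
    rwa [div_le_iff₀ (by positivity)] at hKγ
  have hK : 0 < K := by
    rcases Nat.eq_zero_or_pos K with h | h
    · subst h; norm_num at hKg
    · exact h
  have hd : 0 < d := by
    rcases Nat.eq_zero_or_pos d with h | h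
    · subst h
      norm_num at hdT
      have : γ^2 ≤ 1 := by nlinarith [hγ.1, hγ.2]
      have : (0:ℝ) ≤ K := by positivity
      nlinarith
    · exact h
  haveI : Nonempty (ExAct d K) := ⟨(none, ⟨0, hK⟩)⟩
  unfold decConstrained
  haveI : Nonempty (ProbabilityMeasure (ExAct d K)) :=
    ⟨⟨Measure.dirac (none, ⟨0, hK⟩), inferInstance⟩⟩
  refine le_ciInf (fun p => ?_)
  obtain ⟨w, k, h1, h2⟩ := part_one d K T γ hγ hdT hKT hKγ (p : Measure (ExAct d K)) inferInstance
  have hsup : (⨆ y, fEx d K T γ w k y) = 1 := by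
    apply le_antisymm
    · refine ciSup_le (fun a => ?_)
      have e1 := hfun_le_one w a.1
      have e2 := Real.sqrt_nonneg ((K:ℝ) / (20 * (T:ℝ)))
      have e3 := hγ.1
      have e4 := hγ.2
      have e5 : (1-γ) * hfun w a.1 ≤ (1-γ) := by nlinarith
      simp only [fEx]
      split_ifs
      · linarith
      · nlinarith
    · have : fEx d K T γ w k (some w, k) = 1 := by
        simp [fEx, hfun_self hd]
      rw [← this]
      exact le_ciSup (Set.finite_range _).bddAbove _
  have hfin : ({f | ∃ w k, f = fEx d K T γ w k} ∪ {fhat d K T γ} : Set (ExAct d K → ℝ)).Finite := by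
    apply Set.Finite.union _ (Set.finite_singleton _)
    refine (Set.finite_range
      (fun q : (Fin d → Bool) × Fin K => fEx d K T γ q.1 q.2)).subset ?_
    rintro f ⟨w, k, rfl⟩
    exact ⟨(w, k), rfl⟩
  haveI : Finite {f : ExAct d K → ℝ //
      f ∈ ({f | ∃ w k, f = fEx d K T γ w k} ∪ {fhat d K T γ} : Set (ExAct d K → ℝ)) ∧
      ∫ x, (f x - fhat d K T γ x)^2 ∂(p : Measure (ExAct d K)) ≤ (1 / (3 * Real.sqrt T))^2} :=
    (hfin.subset (fun f hf => hf.1) : Set.Finite {f : ExAct d K → ℝ |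
      f ∈ ({f | ∃ w k, f = fEx d K T γ w k} ∪ {fhat d K T γ} : Set (ExAct d K → ℝ)) ∧
      ∫ x, (f x - fhat d K T γ x)^2 ∂(p : Measure (ExAct d K)) ≤
        (1 / (3 * Real.sqrt T))^2}).to_subtype
  refine le_ciSup_of_le (Set.finite_range _).bddAbove
    ⟨fEx d K T γ w k, Or.inl ⟨w, k, rfl⟩, h1⟩ ?_
  simp only [hsup]
  exact h2

end
end
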